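/- arXiv:2204.05014 — 7 statements merged into one kernel-verified Lean document; each statement's English description precedes it below -/
import Mathlib

section
/- Let p_1, …, p_r be primes such that for each 1 ≤ i ≤ r there are integers a_i, b_i with p_i = a_i² + b_i² ≡ 1 (mod 8) and both a_i + b_i and a_i − b_i congruent to 1 or −1 modulo 8; let p_{r+1}, …, p_{r+s} be primes each congruent to 7 (mod 8); let q_1, …, q_t be distinct primes each congruent to 3 (mod 8); and let k_1, …, k_{r+s} be non-negative integers. Then neither 64 · p_1^{k_1} ⋯ p_{r+s}^{k_{r+s}} nor 64 · p_1^{k_1} ⋯ p_{r+s}^{k_{r+s}} · q_1 ⋯ q_t belongs to S(16). -/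
open Complex Finset

noncomputable def zeta16 : ℂ := Complex.exp (2 * Real.pi * Complex.I / 16)

noncomputable def fpoly (a : Fin 16 → ℤ) (x : ℂ) : ℂ := ∑ k : Fin 16, (a k : ℂ) * x ^ (k : ℕ)

noncomputable def Nprod (a : Fin 16 → ℤ) (d : ℕ) : ℂ :=
  ∏ l ∈ Finset.filter (fun l => Nat.gcd l 16 = d) (Finset.range 16), fpoly a (zeta16 ^ l)

def circMatrix (a : Fin 16 → ℤ) : Matrix (Fin 16) (Fin 16) ℤ := fun i j => a (i - j)

def S16 : Set ℤ := { n | ∃ a : Fin 16 → ℤ, n = (circMatrix a).det }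

def bcoef (a : Fin 16 → ℤ) (k : Fin 16) : ℤ := (a k + a (k + 8)) + (a (k + 4) + a (k + 12))
def ccoef (a : Fin 16 → ℤ) (k : Fin 16) : ℤ := (a k + a (k + 8)) - (a (k + 4) + a (k + 12))
def ecoef (a : Fin 16 → ℤ) (k : Fin 16) : ℤ := a k - a (k + 8)

/-!
Grouping the sixteenth roots of unity by their fourth powers `1, -1, ±i` writes the determinant as
`N(1) * N(-1) * ‖N(i)‖`, where `N(z)` is the product of the values of `f = ∑ a k X ^ k` at the
fourth roots of `z`. In terms of the values `F r` at `z` of the four sections of `f` modulo `4`,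
* `N(1) = ((F 0 + F 2) ^ 2 - (F 1 + F 3) ^ 2) * ((F 0 - F 2) ^ 2 + (F 1 - F 3) ^ 2)`,
* `N(-1)` is a sum of two squares in `ℤ`, and `‖N(i)‖` is the norm of a Gaussian integer.

If the determinant is `64 * m` with `m` odd, all the squared integers in `N(1)` and `N(-1)` are odd;
the difference of squares is `8` times an odd number, and each of the three sums of two squares is
twice a divisor of `m`. For the `m` of the theorem, every integer squared in such a sum is
`≡ ±1 (mod 8)`: the sum is the norm of `(1 + i) * x` for a Gaussian integer `x` whose norm divides
`m`, and every prime factor of such an `x` lies in the multiplicative set of those `y` for which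
both coordinates of `(1 + i) * y` are `±1` modulo `8`. The primes `q ≡ 3 (mod 8)` do not interfere:
they are inert, and `q ^ 2` does not divide `m`.

At each of `z = 1, -1, i`, count the `r` for which `F r` is divisible exactly once by the prime
above `2` (which is `2`, `2` and `1 + i` respectively). The counts at `-1` and `i` are even because
the integers whose squares sum to `N(-1)` and to `‖N(i)‖` are `≡ ±1 (mod 8)`. Each section
contributes an even number to the three counts together, so the count at `1` is even as well. But
this count has the parity of the odd number `((F 0 + F 2) ^ 2 - (F 1 + F 3) ^ 2) / 8`.
-/

section Circulant

variable {R : Type*} [CommRing R]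

/-- The value at `z` of the polynomial with coefficient vector `x`. Integer coefficients are
evaluated in an arbitrary commutative ring, so that the values at `1`, `-1` and `i` live in `ℤ`, `ℤ`
and `ℤ[i]`. -/
def evalCoeffs {m : ℕ} (x : Fin m → ℤ) (z : R) : R := ∑ j : Fin m, (x j : R) * z ^ (j : ℕ)

theorem map_evalCoeffs {S : Type*} [CommRing S] (φ : R →+* S) {m : ℕ} (x : Fin m → ℤ) (z : R) :
    φ (evalCoeffs x z) = evalCoeffs x (φ z) := by
  simp [evalCoeffs]

theorem det_circulant_eq_prod [IsDomain R] {n : ℕ} [NeZero n] {ζ : R} (hζ : IsPrimitiveRoot ζ n)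
    (v : Fin n → R) :
    (Matrix.circulant v).det = ∏ i : Fin n, ∑ k : Fin n, v k * (ζ ^ (i : ℕ)) ^ (k : ℕ) := by
  let V : Matrix (Fin n) (Fin n) R := Matrix.vandermonde fun i => ζ ^ (i : ℕ)
  let f : Fin n → R := fun i => ∑ k : Fin n, v k * (ζ ^ (i : ℕ)) ^ (k : ℕ)
  have det_V_ne_zero : V.det ≠ 0 :=
    Matrix.det_vandermonde_ne_zero_iff.2 fun i j hij => Fin.ext (hζ.pow_inj i.2 j.2 hij)
  have pow_val_add (i k j : Fin n) :
      (ζ ^ (i : ℕ)) ^ ((k + j : Fin n) : ℕ) =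
        (ζ ^ (i : ℕ)) ^ (k : ℕ) * (ζ ^ (i : ℕ)) ^ (j : ℕ) := by
    have pow_n : (ζ ^ (i : ℕ)) ^ n = 1 := by rw [pow_right_comm, hζ.pow_eq_one, one_pow]
    rw [Fin.val_add, ← pow_eq_pow_mod _ pow_n, pow_add]
  -- Row `i` of `V` is a left eigenvector of the circulant matrix, with eigenvalue `f i`.
  have diagonalization : V * Matrix.circulant v = Matrix.diagonal f * V := by
    ext i j
    rw [Matrix.diagonal_mul, Matrix.mul_apply, Finset.sum_mul]
    simp only [Matrix.circulant_apply, V, Matrix.vandermonde_apply]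
    rw [← Equiv.sum_comp (Equiv.addRight j)]
    refine Finset.sum_congr rfl fun k _ => ?_
    rw [Equiv.coe_addRight, add_sub_cancel_right, pow_val_add]
    ring
  have det_eq := congrArg Matrix.det diagonalization
  rw [Matrix.det_mul, Matrix.det_mul, Matrix.det_diagonal, mul_comm] at det_eq
  exact mul_right_cancel₀ det_V_ne_zero det_eq

theorem det_circMatrix_eq_prod [IsDomain R] {ζ : R} (hζ : IsPrimitiveRoot ζ 16)
    (a : Fin 16 → ℤ) :
    ((circMatrix a).det : R) = ∏ j : Fin 16, evalCoeffs a (ζ ^ (j : ℕ)) := by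
  have map_eq : (circMatrix a).map (Int.cast : ℤ → R) = Matrix.circulant fun k => (a k : R) := rfl
  rw [Int.cast_det, map_eq, det_circulant_eq_prod hζ]
  rfl

/-- The coefficient vector of the `r`-th section `∑ j, a (n * j + r) X ^ j` of the polynomial with
coefficient vector `a`, that is, of its terms with exponent `≡ r (mod n)`. -/
def multisection {m n : ℕ} (a : Fin (m * n) → ℤ) (r : Fin n) : Fin m → ℤ :=
  fun j => a (finProdFinEquiv (j, r))

theorem evalCoeffs_eq_sum_multisection {m n : ℕ} (a : Fin (m * n) → ℤ) (w : R) :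
    evalCoeffs a w = ∑ r : Fin n, evalCoeffs (multisection a r) (w ^ n) * w ^ (r : ℕ) := by
  simp only [evalCoeffs, multisection, Finset.sum_mul]
  rw [← finProdFinEquiv.sum_comp, Fintype.sum_prod_type_right]
  refine Finset.sum_congr rfl fun r _ => Finset.sum_congr rfl fun j _ => ?_
  rw [finProdFinEquiv_apply_val, pow_add, pow_mul]
  ring

/-- With `w ^ 4 = z`, the norm of `F 0 + F 1 * w + F 2 * w ^ 2 + F 3 * w ^ 3` from `R[w]` to
`R[w ^ 2]` is `halfNormFst z F + halfNormSnd z F * w ^ 2`; this is its constant coefficient. -/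
def halfNormFst (z : R) (F : Fin 4 → R) : R := F 0 ^ 2 + z * F 2 ^ 2 - 2 * z * (F 1 * F 3)

/-- The coefficient of `w ^ 2` in the norm described at `halfNormFst`. -/
def halfNormSnd (z : R) (F : Fin 4 → R) : R := 2 * (F 0 * F 2) - (F 1 ^ 2 + z * F 3 ^ 2)

/-- With `w ^ 4 = z`, the norm of `F 0 + F 1 * w + F 2 * w ^ 2 + F 3 * w ^ 3` from `R[w]` to `R`. -/
def quarticNorm (z : R) (F : Fin 4 → R) : R := halfNormFst z F ^ 2 - z * halfNormSnd z F ^ 2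

theorem sum_mul_sum_neg_eq_halfNorm (F : Fin 4 → R) (w : R) :
    (∑ r, F r * w ^ (r : ℕ)) * ∑ r, F r * (-w) ^ (r : ℕ) =
      halfNormFst (w ^ 4) F + halfNormSnd (w ^ 4) F * w ^ 2 := by
  simp only [Fin.sum_univ_four, halfNormFst, halfNormSnd, Fin.coe_ofNat_eq_mod]
  ring

theorem prod_sum_eq_quarticNorm {ι : R} (hι : ι ^ 2 = -1) (F : Fin 4 → R) (w : R) :
    ∏ k : Fin 4, ∑ r, F r * (w * ι ^ (k : ℕ)) ^ (r : ℕ) = quarticNorm (w ^ 4) F := by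
  let N (y : R) : R := (∑ r, F r * y ^ (r : ℕ)) * ∑ r, F r * (-y) ^ (r : ℕ)
  have neg_eq : w * ι ^ 2 = -w := by rw [hι, mul_neg_one]
  have neg_mul_eq : w * ι ^ 3 = -(w * ι) := by rw [pow_succ, hι]; ring
  have sq_eq : (w * ι) ^ 2 = -w ^ 2 := by rw [mul_pow, hι, mul_neg_one]
  have pow_four_eq : (w * ι) ^ 4 = w ^ 4 := by linear_combination ((w * ι) ^ 2 - w ^ 2) * sq_eq
  calc ∏ k : Fin 4, ∑ r, F r * (w * ι ^ (k : ℕ)) ^ (r : ℕ)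
      = N w * N (w * ι) := by
        simp only [N, ← neg_eq, ← neg_mul_eq, Fin.prod_univ_four, Fin.coe_ofNat_eq_mod]
        norm_num
        ring
    _ = quarticNorm (w ^ 4) F := by
        simp only [N, sum_mul_sum_neg_eq_halfNorm, pow_four_eq, sq_eq, quarticNorm]
        ring

theorem quarticNorm_one (F : Fin 4 → R) :
    quarticNorm 1 F = ((F 0 + F 2) ^ 2 - (F 1 + F 3) ^ 2) *
      ((F 0 - F 2) ^ 2 + (F 1 - F 3) ^ 2) := by
  simp only [quarticNorm, halfNormFst, halfNormSnd]
  ring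

theorem quarticNorm_neg_one (F : Fin 4 → R) :
    quarticNorm (-1) F = halfNormFst (-1) F ^ 2 + halfNormSnd (-1) F ^ 2 := by
  rw [quarticNorm, neg_one_mul, sub_neg_eq_add]

/-- The values at `z` of the four sections of `a`. -/
def sectionValues (a : Fin 16 → ℤ) (z : R) : Fin 4 → R :=
  fun r => evalCoeffs (multisection (m := 4) a r) z

/-- The product of the values of `a` at the four fourth roots of `z`, as an element of the ring
containing `z`. -/
def sectionNorm (a : Fin 16 → ℤ) (z : R) : R := quarticNorm z (sectionValues a z)

variable {S : Type*} [CommRing S] (φ : R →+* S)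

theorem map_halfNormFst (z : R) (F : Fin 4 → R) :
    φ (halfNormFst z F) = halfNormFst (φ z) (φ ∘ F) := by
  simp [halfNormFst, map_ofNat φ 2]

theorem map_halfNormSnd (z : R) (F : Fin 4 → R) :
    φ (halfNormSnd z F) = halfNormSnd (φ z) (φ ∘ F) := by
  simp [halfNormSnd, map_ofNat φ 2]

theorem map_comp_sectionValues (a : Fin 16 → ℤ) (z : R) :
    φ ∘ sectionValues a z = sectionValues a (φ z) :=
  funext fun _ => map_evalCoeffs φ _ z

theorem map_sectionNorm (a : Fin 16 → ℤ) (z : R) :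
    φ (sectionNorm a z) = sectionNorm a (φ z) := by
  simp [sectionNorm, quarticNorm, map_halfNormFst, map_halfNormSnd, map_comp_sectionValues]

theorem pow_four_sq_eq_neg_one [IsDomain R] {ζ : R} (hζ : IsPrimitiveRoot ζ 16) :
    (ζ ^ 4) ^ 2 = -1 := by
  have primitive : IsPrimitiveRoot (ζ ^ 8) 2 := hζ.pow (by norm_num) (by norm_num)
  rw [← pow_mul, primitive.eq_neg_one_of_two_right]

theorem det_circMatrix_eq_prod_sectionNorm [IsDomain R] {ζ : R} (hζ : IsPrimitiveRoot ζ 16)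
    (a : Fin 16 → ℤ) :
    ((circMatrix a).det : R) = ∏ m : Fin 4, sectionNorm a ((ζ ^ 4) ^ (m : ℕ)) := by
  have sq_eq : (ζ ^ 4) ^ 2 = -1 := pow_four_sq_eq_neg_one hζ
  rw [det_circMatrix_eq_prod hζ, ← (finProdFinEquiv (m := 4) (n := 4)).prod_comp,
    Fintype.prod_prod_type_right]
  refine Finset.prod_congr rfl fun m _ => ?_
  rw [sectionNorm, ← pow_right_comm ζ m 4, ← prod_sum_eq_quarticNorm sq_eq]
  refine Finset.prod_congr rfl fun k _ => ?_
  rw [finProdFinEquiv_apply_val, pow_add, pow_mul,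
    evalCoeffs_eq_sum_multisection (m := 4) (n := 4)]
  have pow_four_eq : (ζ ^ (m : ℕ) * (ζ ^ 4) ^ (k : ℕ)) ^ 4 = (ζ ^ (m : ℕ)) ^ 4 := by
    have pow_eq_one : ((ζ ^ 4) ^ (k : ℕ)) ^ 4 = 1 := by
      rw [pow_right_comm, ← pow_mul ζ 4 4, hζ.pow_eq_one, one_pow]
    rw [mul_pow, pow_eq_one, mul_one]
  rw [pow_four_eq]
  rfl

end Circulant

local notation "ℤ[i]" => GaussianInt

local notation "𝕚" => (Zsqrtd.sqrtd : ℤ[i])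

section GaussianIntegers

theorem sqrtd_sq : 𝕚 ^ 2 = -1 := by decide

theorem isUnit_sqrtd : IsUnit 𝕚 := .of_mul_eq_one (-𝕚) (by decide)

theorem eq_one_or_eq_of_isUnit {ε : ℤ[i]} (hε : IsUnit ε) :
    ε = 1 ∨ ε = -1 ∨ ε = 𝕚 ∨ ε = -𝕚 := by
  have norm_eq : ε.re * ε.re + ε.im * ε.im = 1 := by
    simpa [Zsqrtd.norm_def] using (Zsqrtd.norm_eq_one_iff' (by norm_num) ε).2 hε
  have re_mem : -1 ≤ ε.re ∧ ε.re ≤ 1 := by constructor <;> nlinarith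
  have im_mem : -1 ≤ ε.im ∧ ε.im ≤ 1 := by constructor <;> nlinarith
  obtain ⟨a, b⟩ := ε
  obtain ⟨ha, ha'⟩ := re_mem
  obtain ⟨hb, hb'⟩ := im_mem
  dsimp only at *
  interval_cases a <;> interval_cases b <;> revert norm_eq <;> decide

theorem norm_sectionNorm_sqrtd (a : Fin 16 → ℤ) :
    ((sectionNorm a 𝕚).norm : ℤ[i]) = sectionNorm a 𝕚 * sectionNorm a (-𝕚) := by
  have star_eq : star (sectionNorm a 𝕚) = sectionNorm a (star 𝕚) :=
    map_sectionNorm (starRingEnd ℤ[i]) a 𝕚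
  have star_sqrtd : star 𝕚 = -𝕚 := by decide
  rw [Zsqrtd.norm_eq_mul_conj, star_eq, star_sqrtd]

theorem det_circMatrix (a : Fin 16 → ℤ) :
    (circMatrix a).det =
      sectionNorm a (1 : ℤ) * sectionNorm a (-1 : ℤ) * (sectionNorm a 𝕚).norm := by
  obtain ⟨ζ, hζ⟩ : ∃ ζ : ℂ, IsPrimitiveRoot ζ 16 :=
    ⟨_, Complex.isPrimitiveRoot_exp 16 (by norm_num)⟩
  have sq_eq := pow_four_sq_eq_neg_one hζ
  let φ : ℤ[i] →+* ℂ := Zsqrtd.lift ⟨ζ ^ 4, by rw [← sq, sq_eq]; norm_num⟩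
  have φ_sqrtd : φ 𝕚 = ζ ^ 4 := by simp [φ]
  apply Int.cast_injective (α := ℂ)
  calc ((circMatrix a).det : ℂ)
      = sectionNorm a 1 * sectionNorm a (-1) *
          (sectionNorm a (ζ ^ 4) * sectionNorm a (-ζ ^ 4)) := by
        have cube_eq : (ζ ^ 4) ^ 3 = -ζ ^ 4 := by rw [pow_succ, sq_eq, neg_one_mul]
        rw [det_circMatrix_eq_prod_sectionNorm hζ]
        simp only [Fin.prod_univ_four, Fin.coe_ofNat_eq_mod, Nat.reduceMod, pow_zero, pow_one,
          sq_eq, cube_eq]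
        ring
    _ = sectionNorm a 1 * sectionNorm a (-1) * φ ((sectionNorm a 𝕚).norm : ℤ[i]) := by
        rw [norm_sectionNorm_sqrtd, map_mul, map_sectionNorm, map_sectionNorm, map_neg, φ_sqrtd]
    _ = _ := by
        have cast_norm (z : ℤ) : ((sectionNorm a z : ℤ) : ℂ) = sectionNorm a (z : ℂ) :=
          map_sectionNorm (Int.castRingHom ℂ) a z
        rw [map_intCast]
        push_cast [cast_norm]
        rfl

end GaussianIntegers

section NumberTheory

/-- The condition `x ≡ ±1 (mod 8)`, imposed on `a + b` and `a - b` for the primes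
`a ^ 2 + b ^ 2`. -/
def IsPmOneModEight (x : ℤ) : Prop := x ≡ 1 [ZMOD 8] ∨ x ≡ -1 [ZMOD 8]

namespace IsPmOneModEight

theorem neg {x : ℤ} (hx : IsPmOneModEight x) : IsPmOneModEight (-x) :=
  hx.symm.imp (fun h => by simpa using h.neg) Int.ModEq.neg

theorem mul_add_mul {a b u v : ℤ} (hadd : IsPmOneModEight (a + b))
    (hsub : IsPmOneModEight (a - b)) (hu : IsPmOneModEight u) (hv : IsPmOneModEight v) :
    IsPmOneModEight (u * a + v * b) := by
  have congr_signs {δ ε : ℤ} (hu : u ≡ δ [ZMOD 8]) (hv : v ≡ ε [ZMOD 8])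
      (h : IsPmOneModEight (δ * a + ε * b)) : IsPmOneModEight (u * a + v * b) :=
    h.imp ((hu.mul_right a).add (hv.mul_right b)).trans
      ((hu.mul_right a).add (hv.mul_right b)).trans
  rcases hu with hu | hu <;> rcases hv with hv | hv <;> apply congr_signs hu hv
  · simpa using hadd
  · simpa [← sub_eq_add_neg] using hsub
  · simpa [sub_eq_add_neg, add_comm] using hsub.neg
  · simpa [add_comm] using hadd.neg

theorem sq_modEq_one {x : ℤ} (hx : IsPmOneModEight x) : x ^ 2 ≡ 1 [ZMOD 16] := by
  obtain ⟨k, h | h⟩ : ∃ k, x = 8 * k + 1 ∨ x = 8 * k - 1 := by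
    unfold IsPmOneModEight Int.ModEq at hx
    exact ⟨(x + 1) / 8, by omega⟩
  all_goals
    subst h
    refine (Int.modEq_of_dvd ?_).symm
    ring_nf
    omega

theorem even_of_add_four_mul {x n : ℤ} (hx : IsPmOneModEight x)
    (h : IsPmOneModEight (x + 4 * n)) : Even n := by
  unfold IsPmOneModEight Int.ModEq at *
  grind

end IsPmOneModEight

/-- The Gaussian integers `x` such that both coordinates of `(1 + i) * x` are `±1` modulo `8`. The
primes `≡ 1 (mod 8)` of the theorem are the prime numbers that are norms of its elements. -/
def pmOneSubmonoid : Submonoid ℤ[i] where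
  carrier := {x | IsPmOneModEight (x.re + x.im) ∧ IsPmOneModEight (x.re - x.im)}
  one_mem' := by simp [IsPmOneModEight, Int.ModEq]
  mul_mem' := by
    rintro x y ⟨hx_add, hx_sub⟩ ⟨hy_add, hy_sub⟩
    constructor
    · convert hx_add.mul_add_mul hx_sub hy_add hy_sub using 1
      simp only [Zsqrtd.re_mul, Zsqrtd.im_mul]
      ring
    · convert hx_add.mul_add_mul hx_sub hy_sub hy_add.neg using 1
      simp only [Zsqrtd.re_mul, Zsqrtd.im_mul]
      ring

theorem mem_pmOneSubmonoid {x : ℤ[i]} :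
    x ∈ pmOneSubmonoid ↔ IsPmOneModEight (x.re + x.im) ∧ IsPmOneModEight (x.re - x.im) :=
  Iff.rfl

theorem star_mem_pmOneSubmonoid {x : ℤ[i]} (hx : x ∈ pmOneSubmonoid) :
    star x ∈ pmOneSubmonoid := by
  simpa [mem_pmOneSubmonoid, ← sub_eq_add_neg] using hx.symm

theorem mem_pmOneSubmonoid_of_isUnit {x : ℤ[i]} (hx : IsUnit x) : x ∈ pmOneSubmonoid := by
  rcases eq_one_or_eq_of_isUnit hx with rfl | rfl | rfl | rfl <;>
    simp [mem_pmOneSubmonoid, IsPmOneModEight, Int.ModEq]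

theorem mem_pmOneSubmonoid_of_associated {x y : ℤ[i]} (h : Associated x y)
    (hx : x ∈ pmOneSubmonoid) : y ∈ pmOneSubmonoid := by
  obtain ⟨u, rfl⟩ := h
  exact mul_mem hx (mem_pmOneSubmonoid_of_isUnit u.isUnit)

theorem norm_modEq_one_of_mem_pmOneSubmonoid {x : ℤ[i]} (hx : x ∈ pmOneSubmonoid) :
    x.norm ≡ 1 [ZMOD 8] := by
  have two_mul_norm : 2 * x.norm = (x.re + x.im) ^ 2 + (x.re - x.im) ^ 2 := by
    rw [Zsqrtd.norm_def]
    ring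
  have hadd := hx.1.sq_modEq_one
  have hsub := hx.2.sq_modEq_one
  unfold Int.ModEq at *
  omega

/-- The primes allowed with arbitrary multiplicity in the odd part of the excluded values: those
congruent to `7` modulo `8`, and those that are norms from `pmOneSubmonoid`. -/
def IsFreePrime (l : ℕ) : Prop :=
  l.Prime ∧ (l % 8 = 7 ∨ ∃ x ∈ pmOneSubmonoid, x.norm = l)

theorem IsFreePrime.mod_eight {l : ℕ} (hl : IsFreePrime l) : l % 8 = 1 ∨ l % 8 = 7 := by
  rcases hl with ⟨-, h7 | ⟨x, hx, hnorm⟩⟩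
  · exact Or.inr h7
  · have hmod := norm_modEq_one_of_mem_pmOneSubmonoid hx
    rw [hnorm, Int.ModEq] at hmod
    omega

/-- The odd parts of the excluded values: products of free primes and of distinct primes congruent
to `3` modulo `8`. -/
def IsAdmissible (m : ℕ) : Prop :=
  ∀ l : ℕ, l.Prime → l ∣ m → IsFreePrime l ∨ (l % 8 = 3 ∧ ¬ l ^ 2 ∣ m)

theorem IsAdmissible.of_dvd {m n : ℕ} (hm : IsAdmissible m) (h : n ∣ m) : IsAdmissible n :=
  fun l hl hln => (hm l hl (hln.trans h)).imp_right (And.imp_right fun hsq h' => hsq (h'.trans h))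

theorem IsAdmissible.odd {m : ℕ} (hm : IsAdmissible m) : Odd m := by
  by_contra heven
  rcases hm 2 Nat.prime_two (Nat.not_odd_iff_even.1 heven).two_dvd with h | ⟨h, -⟩
  · simpa using h.mod_eight
  · simp at h

theorem isAdmissible_mul {m n : ℕ} (hm : ∀ l, l.Prime → l ∣ m → IsFreePrime l)
    (hn : ∀ l, l.Prime → l ∣ n → l % 8 = 3) (hsq : Squarefree n) : IsAdmissible (m * n) := by
  intro l hl hlmn
  by_cases hlm : l ∣ m
  · exact Or.inl (hm l hl hlm)
  have l_mod := hn l hl ((hl.dvd_mul.1 hlmn).resolve_left hlm)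
  refine Or.inr ⟨l_mod, fun hdvd => ?_⟩
  have sq_dvd : l ^ 2 ∣ n :=
    (((Nat.Prime.coprime_iff_not_dvd hl).2 hlm).pow_left 2).dvd_of_dvd_mul_left hdvd
  exact hl.not_isUnit (hsq l (by rwa [← sq]))

theorem IsFreePrime.of_dvd_prod_pow {ι : Type*} {s : Finset ι} {p k : ι → ℕ}
    (hp : ∀ i ∈ s, IsFreePrime (p i)) {l : ℕ} (hl : l.Prime) (h : l ∣ ∏ i ∈ s, p i ^ k i) :
    IsFreePrime l := by
  obtain ⟨i, hi, l_dvd⟩ := (hl.prime.dvd_finsetProd_iff _).1 h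
  rw [(Nat.prime_dvd_prime_iff_eq hl (hp i hi).1).1 (hl.dvd_of_dvd_pow l_dvd)]
  exact hp i hi

theorem isFreePrime_of_sq_add_sq {p : ℕ} (hp : p.Prime) {a b : ℤ} (h : (p : ℤ) = a ^ 2 + b ^ 2)
    (hadd : IsPmOneModEight (a + b)) (hsub : IsPmOneModEight (a - b)) : IsFreePrime p := by
  refine ⟨hp, Or.inr ⟨⟨a, b⟩, ⟨hadd, hsub⟩, ?_⟩⟩
  rw [h, Zsqrtd.norm_def]
  ring

theorem isAdmissible_mul_prod {m : ℕ} (hm : ∀ l, l.Prime → l ∣ m → IsFreePrime l) {ι : Type*}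
    [Fintype ι] {q : ι → ℕ} (hq : ∀ j, (q j).Prime) (hq3 : ∀ j, q j % 8 = 3)
    (hinj : Function.Injective q) : IsAdmissible (m * ∏ j, q j) := by
  refine isAdmissible_mul hm (fun l hl h => ?_) ?_
  · obtain ⟨j, -, l_dvd⟩ := (hl.prime.dvd_finsetProd_iff _).1 h
    rw [(Nat.prime_dvd_prime_iff_eq hl (hq j)).1 l_dvd]
    exact hq3 j
  · refine Finset.squarefree_prod_of_pairwise_isCoprime (fun i _ j _ hij => ?_)
      fun j _ => (hq j).squarefree
    exact Nat.coprime_iff_isRelPrime.1 ((Nat.coprime_primes (hq i) (hq j)).2 (hinj.ne hij))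

theorem associated_or_associated_star_of_dvd_norm {x y : ℤ[i]} (hx : Prime x) (hy : Prime y)
    (h : x ∣ y.norm) : Associated x y ∨ Associated (star x) y := by
  rw [Zsqrtd.norm_eq_mul_conj] at h
  rcases hx.dvd_or_dvd h with h | h
  · exact Or.inl (hx.associated_of_dvd hy h)
  · have star_dvd : star x ∣ y := by
      simpa [starRingEnd_apply] using map_dvd (starRingEnd ℤ[i]) h
    have star_prime : Prime (star x) := (MulEquiv.prime_iff (starRingAut (R := ℤ[i]))).2 hx
    exact Or.inr (star_prime.associated_of_dvd hy star_dvd)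

theorem prime_of_norm_eq_prime {x : ℤ[i]} {l : ℕ} (hl : l.Prime) (hx : x.norm = l) :
    Prime x := by
  have natAbs_norm : x.norm.natAbs = l := by simp [hx]
  refine Irreducible.prime (irreducible_iff.2 ⟨fun hunit => hl.ne_one ?_, ?_⟩)
  · rw [← natAbs_norm, Zsqrtd.norm_eq_one_iff.2 hunit]
  · rintro y z rfl
    rw [Zsqrtd.norm_mul, Int.natAbs_mul] at natAbs_norm
    have factor := Nat.prime_mul_iff.1 (natAbs_norm ▸ hl)
    exact factor.symm.imp (Zsqrtd.norm_eq_one_iff.1 ·.2) (Zsqrtd.norm_eq_one_iff.1 ·.2)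

theorem mem_pmOneSubmonoid_of_dvd_norm {x y : ℤ[i]} (hx : Prime x) (hy : Prime y)
    (hmem : y ∈ pmOneSubmonoid) (h : y ∣ x.norm) : x ∈ pmOneSubmonoid := by
  rcases associated_or_associated_star_of_dvd_norm hy hx h with h | h
  · exact mem_pmOneSubmonoid_of_associated h hmem
  · exact mem_pmOneSubmonoid_of_associated h (star_mem_pmOneSubmonoid hmem)

theorem norm_eq_sq_of_prime_of_dvd_norm {x : ℤ[i]} {l : ℕ} (hx : Prime x)
    (hl : Prime (l : ℤ[i])) (h : (l : ℤ[i]) ∣ x.norm) : x.norm = l ^ 2 := by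
  have associated : Associated (l : ℤ[i]) x := by
    simpa using associated_or_associated_star_of_dvd_norm hl hx h
  rw [← Zsqrtd.norm_eq_of_associated (by norm_num) associated, Zsqrtd.norm_natCast, sq]

theorem mem_pmOneSubmonoid_of_prime {x : ℤ[i]} (hx : Prime x)
    (hadm : IsAdmissible x.norm.natAbs) : x ∈ pmOneSubmonoid := by
  have norm_ne_one : x.norm.natAbs ≠ 1 := fun h => hx.not_isUnit (Zsqrtd.norm_eq_one_iff.1 h)
  obtain ⟨l, hl, l_dvd⟩ := Nat.exists_prime_and_dvd norm_ne_one
  have : Fact l.Prime := ⟨hl⟩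
  have l_dvd_norm : (l : ℤ[i]) ∣ x.norm := by
    simpa using (Int.castRingHom ℤ[i]).map_dvd (Int.natCast_dvd.2 l_dvd)
  rcases hadm l hl l_dvd with ⟨-, h7 | ⟨y, hy, hnorm⟩⟩ | ⟨h3, hsq⟩
  · have l_mem : (l : ℤ[i]) ∈ pmOneSubmonoid := by
      simp only [mem_pmOneSubmonoid, Zsqrtd.re_natCast, Zsqrtd.im_natCast, IsPmOneModEight,
        Int.ModEq]
      omega
    have l_prime := GaussianInt.prime_of_nat_prime_of_mod_four_eq_three l (by omega)
    exact mem_pmOneSubmonoid_of_dvd_norm hx l_prime l_mem l_dvd_norm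
  · have y_dvd : y ∣ x.norm := by
      refine Dvd.dvd.trans ⟨star y, ?_⟩ l_dvd_norm
      rw [← Zsqrtd.norm_eq_mul_conj, hnorm, Int.cast_natCast]
    exact mem_pmOneSubmonoid_of_dvd_norm hx (prime_of_norm_eq_prime hl hnorm) hy y_dvd
  · have l_prime := GaussianInt.prime_of_nat_prime_of_mod_four_eq_three l (by omega)
    have norm_eq := norm_eq_sq_of_prime_of_dvd_norm hx l_prime l_dvd_norm
    refine absurd ?_ hsq
    rw [norm_eq, Int.natAbs_pow, Int.natAbs_natCast]

theorem mem_pmOneSubmonoid_of_isAdmissible_norm {x : ℤ[i]} (hx : x ≠ 0)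
    (hadm : IsAdmissible x.norm.natAbs) : x ∈ pmOneSubmonoid := by
  induction x using UniqueFactorizationMonoid.induction_on_prime with
  | h₁ => exact absurd rfl hx
  | h₂ y hy => exact mem_pmOneSubmonoid_of_isUnit hy
  | h₃ y q hy hq ih =>
    rw [Zsqrtd.norm_mul, Int.natAbs_mul] at hadm
    exact mul_mem (mem_pmOneSubmonoid_of_prime hq (hadm.of_dvd (dvd_mul_right _ _)))
      (ih hy (hadm.of_dvd (dvd_mul_left _ _)))

theorem IsAdmissible.isPmOneModEight_of_sq_add_sq {m : ℕ} (hm : IsAdmissible m) {u v n : ℤ}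
    (h : u ^ 2 + v ^ 2 = 2 * n) (hn : n ∣ m) : IsPmOneModEight u ∧ IsPmOneModEight v := by
  have even_add : Even (u + v) := by
    have : Even (u ^ 2 + v ^ 2) := h ▸ even_two_mul n
    simpa [parity_simps] using this
  obtain ⟨b, hb⟩ := even_add
  obtain rfl : v = b + b - u := eq_sub_of_add_eq' hb
  let x : ℤ[i] := ⟨b, u - b⟩
  have norm_eq : x.norm = n := by
    apply mul_left_cancel₀ (two_ne_zero (α := ℤ))
    simp only [Zsqrtd.norm_def, x]
    linear_combination h
  have norm_dvd : x.norm.natAbs ∣ m := Int.natAbs_dvd_natAbs.2 (norm_eq ▸ hn)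
  have x_ne_zero : x ≠ 0 := by
    intro hx
    simp only [hx, Zsqrtd.norm_zero, Int.natAbs_zero, zero_dvd_iff] at norm_dvd
    exact absurd (norm_dvd ▸ hm.odd) (by decide)
  have hmem := mem_pmOneSubmonoid_of_isAdmissible_norm x_ne_zero (hm.of_dvd norm_dvd)
  have re_add_im : x.re + x.im = u := add_sub_cancel b u
  have re_sub_im : x.re - x.im = b + b - u := by
    simp only [x]
    ring
  rwa [mem_pmOneSubmonoid, re_add_im, re_sub_im] at hmem

end NumberTheory

section LocalCongruences

/-- The indicator that `2` divides `x` exactly once. -/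
def twoExact (x : ℤ) : ℤ := if x % 4 = 2 then 1 else 0

/-- The indicator that `1 + i`, the prime of `ℤ[i]` above `2`, divides `x` exactly once. -/
def oneAddIExact (x : ℤ[i]) : ℤ := if x.re % 2 = 1 ∧ x.im % 2 = 1 then 1 else 0

theorem twoExact_eq_zero_of_odd {x : ℤ} (hx : Odd x) : twoExact x = 0 :=
  if_neg (by grind)

theorem twoExact_two_mul_modEq (k : ℤ) : twoExact (2 * k) ≡ k [ZMOD 2] := by
  unfold twoExact Int.ModEq
  split_ifs <;> omega

theorem two_mul_mul_modEq {x y : ℤ} (h : Odd (x + y)) :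
    2 * (x * y) ≡ 4 * (twoExact x + twoExact y) [ZMOD 8] := by
  wlog hy : Odd y generalizing x y
  · rw [mul_comm x, add_comm (twoExact x)]
    exact this (by rwa [add_comm]) (by grind)
  obtain ⟨k, rfl⟩ : Even x := by grind
  rw [twoExact_eq_zero_of_odd hy, ← two_mul]
  have exact_modEq := twoExact_two_mul_modEq k
  obtain ⟨j, rfl⟩ := hy
  have expand : 2 * (2 * k * (2 * j + 1)) = 4 * k + 8 * (k * j) := by ring
  unfold Int.ModEq at *
  omega

theorem isPmOneModEight_sq_sub_sq_add {x y : ℤ} (h : Odd (x + y)) :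
    IsPmOneModEight (x ^ 2 - y ^ 2 + 4 * (twoExact x + twoExact y)) := by
  have sq_sub_sq : x ^ 2 - y ^ 2 = (x + y) ^ 2 - 2 * (x * y) - 2 * y ^ 2 := by ring
  have sq_add := Int.eight_dvd_sq_sub_one_of_odd h
  have mul_modEq := two_mul_mul_modEq h
  have two_mul_sq : 2 * y ^ 2 ≡ 0 [ZMOD 8] ∨ 2 * y ^ 2 ≡ 2 [ZMOD 8] := by
    rcases Int.even_or_odd' y with ⟨j, rfl | rfl⟩
    · exact Or.inl (Int.modEq_zero_iff_dvd.2 ⟨j ^ 2, by ring⟩)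
    · exact Or.inr (Int.modEq_iff_dvd.2 ⟨-(j ^ 2 + j), by ring⟩)
  rw [sq_sub_sq]
  unfold IsPmOneModEight Int.ModEq at *
  omega

theorem sq_add_modEq {x y : ℤ} (h : IsPmOneModEight (x - y)) :
    (x + y) ^ 2 ≡ 1 + 8 * (twoExact x + twoExact y) [ZMOD 16] := by
  have odd_add : Odd (x + y) := by
    unfold IsPmOneModEight Int.ModEq at h
    grind
  have mul_modEq := (two_mul_mul_modEq odd_add).mul_left' (c := 2)
  calc (x + y) ^ 2 = (x - y) ^ 2 + 2 * (2 * (x * y)) := by ring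
    _ ≡ 1 + 2 * (4 * (twoExact x + twoExact y)) [ZMOD 16] := h.sq_modEq_one.add mul_modEq
    _ = 1 + 8 * (twoExact x + twoExact y) := by ring

theorem sq_sub_sq_modEq {F : Fin 4 → ℤ} (h₀₂ : IsPmOneModEight (F 0 - F 2))
    (h₁₃ : IsPmOneModEight (F 1 - F 3)) :
    (F 0 + F 2) ^ 2 - (F 1 + F 3) ^ 2 ≡ 8 * ∑ r, twoExact (F r) [ZMOD 16] := by
  have sq₀₂ := sq_add_modEq h₀₂
  have sq₁₃ := sq_add_modEq h₁₃
  rw [Fin.sum_univ_four]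
  unfold Int.ModEq at *
  omega

theorem isPmOneModEight_halfNormFst_neg_one_add {F : Fin 4 → ℤ} (h₀₂ : Odd (F 0 + F 2))
    (h₁₃ : Odd (F 1 + F 3)) :
    IsPmOneModEight (halfNormFst (-1) F + 4 * ∑ r, twoExact (F r)) := by
  have fst_eq : halfNormFst (-1) F = F 0 ^ 2 - F 2 ^ 2 + 2 * (F 1 * F 3) := by
    rw [halfNormFst]
    ring
  have main := isPmOneModEight_sq_sub_sq_add h₀₂
  have cross := two_mul_mul_modEq h₁₃
  rw [fst_eq, Fin.sum_univ_four]
  unfold IsPmOneModEight Int.ModEq at *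
  omega

/-- The residue map of `ℤ[i]` at the prime above `2`. -/
def gaussianParity : ℤ[i] →+* ZMod 2 := Zsqrtd.lift ⟨1, by decide⟩

theorem gaussianParity_apply (x : ℤ[i]) : gaussianParity x = x.re + x.im := by
  simp [gaussianParity, Zsqrtd.lift]

theorem gaussianParity_eq_one_iff {x : ℤ[i]} : gaussianParity x = 1 ↔ Odd (x.re + x.im) := by
  rw [gaussianParity_apply, ← Int.cast_add, ZMod.intCast_eq_one_iff_odd]

theorem gaussianParity_eq_zero_iff {x : ℤ[i]} : gaussianParity x = 0 ↔ Even (x.re + x.im) := by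
  rw [gaussianParity_apply, ← Int.cast_add, ZMod.intCast_eq_zero_iff_even]

theorem gaussianParity_sqrtd : gaussianParity 𝕚 = 1 := by decide

theorem intCast_norm_eq_gaussianParity (x : ℤ[i]) : (x.norm : ZMod 2) = gaussianParity x := by
  rw [gaussianParity_apply, Zsqrtd.norm_def]
  push_cast
  rw [← sq, neg_one_mul, neg_mul, sub_neg_eq_add, ← sq, ZMod.pow_card, ZMod.pow_card]

theorem exists_eq_mul_one_add_sqrtd_add_two_mul {x : ℤ[i]} (hx : gaussianParity x = 0) :
    ∃ k, x = oneAddIExact x * (1 + 𝕚) + 2 * k := by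
  rw [gaussianParity_eq_zero_iff] at hx
  refine ⟨⟨(x.re - oneAddIExact x) / 2, (x.im - oneAddIExact x) / 2⟩, ?_⟩
  ext <;> simp only [Zsqrtd.re_add, Zsqrtd.re_mul, Zsqrtd.re_intCast, Zsqrtd.re_one,
    Zsqrtd.re_sqrtd, Zsqrtd.re_ofNat, Zsqrtd.im_add, Zsqrtd.im_mul, Zsqrtd.im_intCast,
    Zsqrtd.im_one, Zsqrtd.im_sqrtd, Zsqrtd.im_ofNat] <;> grind [oneAddIExact]

theorem oneAddIExact_eq_zero {x : ℤ[i]} (hx : gaussianParity x = 1) : oneAddIExact x = 0 :=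
  if_neg (by rw [gaussianParity_eq_one_iff] at hx; grind)

theorem exists_eq_unit_add_two_mul {x : ℤ[i]} (hx : gaussianParity x = 1) :
    ∃ ε k, (ε = 1 ∨ ε = 𝕚) ∧ x = ε + 2 * k := by
  rw [gaussianParity_eq_one_iff] at hx
  rcases Int.even_or_odd x.re with h | h
  · refine ⟨𝕚, ⟨x.re / 2, x.im / 2⟩, Or.inr rfl, ?_⟩
    ext <;> simp <;> grind
  · refine ⟨1, ⟨x.re / 2, x.im / 2⟩, Or.inl rfl, ?_⟩
    ext <;> simp <;> grind

theorem gaussianParity_cases_of_add {x y : ℤ[i]} (h : gaussianParity (x + y) = 1) :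
    (gaussianParity x = 1 ∧ gaussianParity y = 0) ∨
      (gaussianParity x = 0 ∧ gaussianParity y = 1) := by
  have cases_of_add : ∀ a b : ZMod 2, a + b = 1 → (a = 1 ∧ b = 0) ∨ (a = 0 ∧ b = 1) := by decide
  exact cases_of_add _ _ (by rwa [← map_add])

theorem exists_sq_eq_of_gaussianParity_eq_one {x : ℤ[i]} (hx : gaussianParity x = 1) :
    ∃ ε c, (ε = 1 ∨ ε = -1) ∧ x ^ 2 = ε + 4 * c := by
  obtain ⟨_, k, rfl | rfl, rfl⟩ := exists_eq_unit_add_two_mul hx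
  · exact ⟨1, k + k ^ 2, Or.inl rfl, by ring⟩
  · exact ⟨-1, 𝕚 * k + k ^ 2, Or.inr rfl, by linear_combination sqrtd_sq⟩

theorem exists_sq_eq_of_gaussianParity_eq_zero {x : ℤ[i]} (hx : gaussianParity x = 0) :
    ∃ c, x ^ 2 = 4 * c ∨ x ^ 2 = 2 * 𝕚 + 4 * c := by
  obtain ⟨k, hk⟩ := exists_eq_mul_one_add_sqrtd_add_two_mul hx
  unfold oneAddIExact at hk
  split_ifs at hk
  · exact ⟨(1 + 𝕚) * k + k ^ 2, Or.inr (by rw [hk]; push_cast; linear_combination sqrtd_sq)⟩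
  · exact ⟨k ^ 2, Or.inl (by rw [hk]; push_cast; ring)⟩

theorem exists_sq_add_mul_sq_eq {x y η : ℤ[i]} (hx : gaussianParity x = 1)
    (hy : gaussianParity y = 0) (hη : η = 𝕚 ∨ η = -𝕚) :
    ∃ ε c, IsUnit ε ∧ x ^ 2 + η * y ^ 2 = ε + 4 * c := by
  obtain ⟨ε, c, hε, hx⟩ := exists_sq_eq_of_gaussianParity_eq_one hx
  have isUnit : IsUnit ε := by rcases hε with rfl | rfl <;> simp
  obtain ⟨d, hy | hy⟩ := exists_sq_eq_of_gaussianParity_eq_zero hy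
  · exact ⟨ε, c + η * d, isUnit, by rw [hx, hy]; ring⟩
  · obtain ⟨e, he⟩ : ∃ e, ε + η * (2 * 𝕚) = -ε + 4 * e := by
      rcases hε with rfl | rfl <;> rcases hη with rfl | rfl
      exacts [⟨0, by decide⟩, ⟨1, by decide⟩, ⟨-1, by decide⟩, ⟨0, by decide⟩]
    exact ⟨-ε, c + η * d + e, isUnit.neg, by rw [hx, hy]; linear_combination he⟩

theorem exists_sq_add_sqrtd_mul_sq_eq {x y : ℤ[i]} (h : gaussianParity (x + y) = 1) :
    ∃ ε c, IsUnit ε ∧ x ^ 2 + 𝕚 * y ^ 2 = ε + 4 * c := by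
  rcases gaussianParity_cases_of_add h with ⟨hx, hy⟩ | ⟨hx, hy⟩
  · exact exists_sq_add_mul_sq_eq hx hy (Or.inl rfl)
  · obtain ⟨ε, c, hε, heq⟩ := exists_sq_add_mul_sq_eq hy hx (Or.inr rfl)
    exact ⟨𝕚 * ε, 𝕚 * c, isUnit_sqrtd.mul hε,
      by linear_combination 𝕚 * heq + x ^ 2 * sqrtd_sq⟩

theorem exists_one_add_sqrtd_mul_eq {ε : ℤ[i]} (hε : IsUnit ε) :
    ∃ c, (1 + 𝕚) * ε = 1 + 𝕚 + 2 * c := by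
  rcases eq_one_or_eq_of_isUnit hε with rfl | rfl | rfl | rfl
  exacts [⟨0, by decide⟩, ⟨-1 - 𝕚, by decide⟩, ⟨-1, by decide⟩, ⟨-𝕚, by decide⟩]

theorem exists_two_mul_mul_eq {x y κ : ℤ[i]} (h : gaussianParity (x + y) = 1) (hκ : IsUnit κ) :
    ∃ c, 2 * κ * (x * y) = 2 * (oneAddIExact x + oneAddIExact y) * (1 + 𝕚) + 4 * c := by
  wlog hx : gaussianParity x = 1 generalizing x y
  · have hy : gaussianParity y = 1 :=
      ((gaussianParity_cases_of_add h).resolve_left fun h => hx h.1).2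
    rw [mul_comm x, add_comm (oneAddIExact x : ℤ[i])]
    exact this (by rwa [add_comm]) hy
  have hy : gaussianParity y = 0 := by simpa [hx] using h
  obtain ⟨ε, j, hε_cases, x_eq⟩ := exists_eq_unit_add_two_mul hx
  have hε : IsUnit ε := by rcases hε_cases with rfl | rfl <;> simp [isUnit_sqrtd]
  obtain ⟨k, hk⟩ := exists_eq_mul_one_add_sqrtd_add_two_mul hy
  obtain ⟨c, hc⟩ := exists_one_add_sqrtd_mul_eq (hκ.mul hε)
  rw [oneAddIExact_eq_zero hx]
  generalize oneAddIExact y = n at *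
  refine ⟨n * c + κ * (ε * k + j * y), ?_⟩
  rw [x_eq]
  push_cast
  linear_combination 2 * n * hc + 2 * κ * ε * hk

theorem exists_quadratic_sq_eq {x y u v κ : ℤ[i]} (hxy : gaussianParity (x + y) = 1)
    (huv : gaussianParity (u + v) = 1) (hκ : IsUnit κ) :
    ∃ (σ : ℤ) (c : ℤ[i]), (σ = 1 ∨ σ = -1) ∧
      (x ^ 2 + 𝕚 * y ^ 2 + 2 * κ * (u * v)) ^ 2 =
        σ + 4 * (oneAddIExact u + oneAddIExact v) * (1 + 𝕚) + 8 * c := by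
  obtain ⟨ε, b, hε, sq_add⟩ := exists_sq_add_sqrtd_mul_sq_eq hxy
  obtain ⟨c, two_mul⟩ := exists_two_mul_mul_eq huv hκ
  obtain ⟨d, hd⟩ := exists_one_add_sqrtd_mul_eq hε
  obtain ⟨σ, hσ, ε_sq⟩ : ∃ σ : ℤ, (σ = 1 ∨ σ = -1) ∧ ε ^ 2 = σ := by
    rcases eq_one_or_eq_of_isUnit hε with rfl | rfl | rfl | rfl
    exacts [⟨1, by decide⟩, ⟨1, by decide⟩, ⟨-1, by decide⟩, ⟨-1, by decide⟩]
  rw [sq_add, two_mul]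
  generalize (oneAddIExact u + oneAddIExact v : ℤ[i]) = n
  refine ⟨σ, n * d + n ^ 2 * 𝕚 + 2 * (b + c) ^ 2 + (b + c) * (ε + 2 * n * (1 + 𝕚)), hσ, ?_⟩
  linear_combination ε_sq + 4 * n * hd + 4 * n ^ 2 * sqrtd_sq

theorem isPmOneModEight_re_quarticNorm_sqrtd_add {F : Fin 4 → ℤ[i]}
    (h₀₂ : gaussianParity (F 0 + F 2) = 1) (h₁₃ : gaussianParity (F 1 + F 3) = 1) :
    IsPmOneModEight ((quarticNorm 𝕚 F).re + 4 * ∑ r, oneAddIExact (F r)) := by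
  obtain ⟨σ, b, hσ, fst_sq⟩ := exists_quadratic_sq_eq h₀₂ h₁₃ isUnit_sqrtd.neg
  obtain ⟨τ, c, -, snd_sq⟩ := exists_quadratic_sq_eq h₁₃ h₀₂ isUnit_one.neg
  have quarticNorm_eq : quarticNorm 𝕚 F =
      σ + 4 * (oneAddIExact (F 1) + oneAddIExact (F 3)) * (1 + 𝕚) + 8 * b -
        𝕚 * (τ + 4 * (oneAddIExact (F 0) + oneAddIExact (F 2)) * (1 + 𝕚) + 8 * c) := by
    rw [← fst_sq, ← snd_sq, quarticNorm, halfNormFst, halfNormSnd]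
    ring
  have re_eq : (quarticNorm 𝕚 F).re = σ + 4 * ∑ r, oneAddIExact (F r) + 8 * (b.re + c.im) := by
    rw [quarticNorm_eq, Fin.sum_univ_four]
    simp
    ring
  rw [re_eq]
  unfold IsPmOneModEight Int.ModEq
  omega

end LocalCongruences

section TwoAdicObstruction

theorem even_sum_exact_evalCoeffs (x : Fin 4 → ℤ) :
    Even (twoExact (evalCoeffs x 1) + twoExact (evalCoeffs x (-1)) +
      oneAddIExact (evalCoeffs x 𝕚)) := by
  have one_eq : evalCoeffs x (1 : ℤ) = x 0 + x 1 + x 2 + x 3 := by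
    simp [evalCoeffs, Fin.sum_univ_four]
  have neg_one_eq : evalCoeffs x (-1 : ℤ) = x 0 - x 1 + x 2 - x 3 := by
    simp [evalCoeffs, Fin.sum_univ_four]
    ring
  have sqrtd_eq : evalCoeffs x 𝕚 = ⟨x 0 - x 2, x 1 - x 3⟩ := by
    have sqrtd_cube : 𝕚 ^ 3 = -𝕚 := by decide
    simp only [evalCoeffs, Fin.sum_univ_four, Fin.coe_ofNat_eq_mod, Nat.reduceMod, pow_zero,
      pow_one, sqrtd_sq, sqrtd_cube]
    ext <;> simp <;> ring
  rw [one_eq, neg_one_eq, sqrtd_eq, twoExact, twoExact, oneAddIExact, Int.even_iff]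
  split_ifs <;> grind

theorem even_sum_exact_sectionValues (a : Fin 16 → ℤ) :
    Even (∑ r, twoExact (sectionValues a 1 r) + ∑ r, twoExact (sectionValues a (-1) r) +
      ∑ r, oneAddIExact (sectionValues a 𝕚 r)) := by
  rw [← Finset.sum_add_distrib, ← Finset.sum_add_distrib]
  exact Finset.sum_induction _ Even (fun _ _ => Even.add) Even.zero fun r _ =>
    even_sum_exact_evalCoeffs _

theorem halfNormFst_one_zmod_two (F : Fin 4 → ZMod 2) : halfNormFst 1 F = F 0 + F 2 := by
  rw [halfNormFst, ZMod.pow_card, ZMod.pow_card, CharTwo.two_eq_zero (R := ZMod 2)]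
  ring

theorem halfNormSnd_one_zmod_two (F : Fin 4 → ZMod 2) : halfNormSnd 1 F = F 1 + F 3 := by
  rw [halfNormSnd, ZMod.pow_card, ZMod.pow_card, CharTwo.two_eq_zero (R := ZMod 2),
    CharTwo.sub_eq_add]
  ring

theorem quarticNorm_one_zmod_two (F : Fin 4 → ZMod 2) :
    quarticNorm 1 F = F 0 + F 2 + (F 1 + F 3) := by
  rw [quarticNorm, ZMod.pow_card, ZMod.pow_card, halfNormFst_one_zmod_two,
    halfNormSnd_one_zmod_two, one_mul, CharTwo.sub_eq_add]

variable (a : Fin 16 → ℤ)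

theorem intCast_comp_sectionValues {z : ℤ} (hz : Odd z) :
    Int.castRingHom (ZMod 2) ∘ sectionValues a z = sectionValues a 1 := by
  rw [map_comp_sectionValues, eq_intCast, hz.intCast_zmod_two]

theorem gaussianParity_comp_sectionValues :
    gaussianParity ∘ sectionValues a 𝕚 = sectionValues a 1 := by
  rw [map_comp_sectionValues, gaussianParity_sqrtd]

theorem odd_sectionValues_add_iff {z : ℤ} (hz : Odd z) (i j : Fin 4) :
    Odd (sectionValues a z i + sectionValues a z j) ↔
      sectionValues a (1 : ZMod 2) i + sectionValues a (1 : ZMod 2) j = 1 := by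
  rw [← intCast_comp_sectionValues a hz, ← ZMod.intCast_eq_one_iff_odd]
  simp

theorem intCast_halfNormFst_neg_one :
    ((halfNormFst (-1) (sectionValues a (-1)) : ℤ) : ZMod 2) =
      sectionValues a 1 0 + sectionValues a 1 2 := by
  rw [← eq_intCast (Int.castRingHom (ZMod 2)), map_halfNormFst,
    intCast_comp_sectionValues a (by decide), map_neg, map_one, CharTwo.neg_eq,
    halfNormFst_one_zmod_two]

theorem intCast_halfNormSnd_neg_one :
    ((halfNormSnd (-1) (sectionValues a (-1)) : ℤ) : ZMod 2) =
      sectionValues a 1 1 + sectionValues a 1 3 := by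
  rw [← eq_intCast (Int.castRingHom (ZMod 2)), map_halfNormSnd,
    intCast_comp_sectionValues a (by decide), map_neg, map_one, CharTwo.neg_eq,
    halfNormSnd_one_zmod_two]

theorem intCast_norm_sectionNorm_sqrtd :
    ((sectionNorm a 𝕚).norm : ZMod 2) =
      sectionValues a 1 0 + sectionValues a 1 2 +
        (sectionValues a 1 1 + sectionValues a 1 3) := by
  rw [intCast_norm_eq_gaussianParity, map_sectionNorm, gaussianParity_sqrtd, sectionNorm,
    quarticNorm_one_zmod_two]

theorem odd_and_odd_of_mul_eq_sixtyFour_mul {s t u v d e n m : ℤ} (hm : Odd m)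
    (hu : (u : ZMod 2) = s) (hv : (v : ZMod 2) = t) (hd : (d : ZMod 2) = s)
    (he : (e : ZMod 2) = t) (hn : (n : ZMod 2) = s + t)
    (h : (s ^ 2 - t ^ 2) * (u ^ 2 + v ^ 2) * (d ^ 2 + e ^ 2) * n = 64 * m) :
    Odd s ∧ Odd t := by
  have same_parity : (s : ZMod 2) = t := by
    have product_eq := congrArg (Int.cast : ℤ → ZMod 2) h
    push_cast [hu, hv, hd, he, hn] at product_eq
    have eq_of_product : ∀ α β γ : ZMod 2,
        (α ^ 2 - β ^ 2) * (α ^ 2 + β ^ 2) * (α ^ 2 + β ^ 2) * (α + β) = 64 * γ → α = β := by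
      decide
    exact eq_of_product _ _ _ product_eq
  rw [← Int.not_even_iff_odd, ← Int.not_even_iff_odd, ← ZMod.intCast_eq_zero_iff_even,
    ← ZMod.intCast_eq_zero_iff_even, ← same_parity, and_self]
  intro hs
  have two_dvd {x : ℤ} (hx : (x : ZMod 2) = 0) : 2 ∣ x :=
    (ZMod.intCast_eq_zero_iff_even.1 hx).two_dvd
  obtain ⟨s', rfl⟩ := two_dvd hs
  obtain ⟨t', rfl⟩ := two_dvd (same_parity.symm.trans hs)
  obtain ⟨u, rfl⟩ := two_dvd (hu.trans hs)
  obtain ⟨v, rfl⟩ := two_dvd (hv.trans (same_parity.symm.trans hs))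
  obtain ⟨d, rfl⟩ := two_dvd (hd.trans hs)
  obtain ⟨e, rfl⟩ := two_dvd (he.trans (same_parity.symm.trans hs))
  obtain ⟨n, rfl⟩ := two_dvd (hn.trans (by rw [← same_parity, hs, add_zero]))
  have m_eq : m = 2 * ((s' ^ 2 - t' ^ 2) * (u ^ 2 + v ^ 2) * (d ^ 2 + e ^ 2) * n) := by linarith
  exact Int.not_even_iff_odd.2 hm (m_eq ▸ even_two_mul _)

theorem exists_factorization_of_mul_eq_sixtyFour_mul {s t u v d e n m : ℤ} (hs : Odd s)
    (ht : Odd t) (hu : Odd u) (hv : Odd v) (hd : Odd d) (he : Odd e) (hn : Even n)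
    (h : (s ^ 2 - t ^ 2) * (u ^ 2 + v ^ 2) * (d ^ 2 + e ^ 2) * n = 64 * m) :
    ∃ k n₁ n₂ n₃, s ^ 2 - t ^ 2 = 8 * k ∧ u ^ 2 + v ^ 2 = 2 * n₁ ∧ d ^ 2 + e ^ 2 = 2 * n₂ ∧
      n = 2 * n₃ ∧ k * n₁ * n₂ * n₃ = m := by
  obtain ⟨k, hk⟩ : 8 ∣ s ^ 2 - t ^ 2 := by
    simpa using dvd_sub (Int.eight_dvd_sq_sub_one_of_odd hs) (Int.eight_dvd_sq_sub_one_of_odd ht)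
  obtain ⟨n₁, h₁⟩ := (hu.pow.add_odd hv.pow : Even (u ^ 2 + v ^ 2)).two_dvd
  obtain ⟨n₂, h₂⟩ := (hd.pow.add_odd he.pow : Even (d ^ 2 + e ^ 2)).two_dvd
  obtain ⟨n₃, rfl⟩ := hn.two_dvd
  rw [hk, h₁, h₂] at h
  exact ⟨k, n₁, n₂, n₃, hk, h₁, h₂, rfl, by linarith⟩

theorem sectionValues_add_eq_one_of_det_eq {m : ℤ} (hm : Odd m) (h : (circMatrix a).det = 64 * m) :
    sectionValues a (1 : ZMod 2) 0 + sectionValues a (1 : ZMod 2) 2 = 1 ∧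
      sectionValues a (1 : ZMod 2) 1 + sectionValues a (1 : ZMod 2) 3 = 1 := by
  have cast_eq (r : Fin 4) : ((sectionValues a 1 r : ℤ) : ZMod 2) = sectionValues a 1 r :=
    congrFun (intCast_comp_sectionValues a odd_one) r
  rw [det_circMatrix, sectionNorm, sectionNorm, quarticNorm_one, quarticNorm_neg_one] at h
  rw [← odd_sectionValues_add_iff a odd_one, ← odd_sectionValues_add_iff a odd_one]
  refine odd_and_odd_of_mul_eq_sixtyFour_mul hm ?_ ?_ ?_ ?_ ?_ h
  · rw [Int.cast_sub, CharTwo.sub_eq_add, Int.cast_add]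
  · rw [Int.cast_sub, CharTwo.sub_eq_add, Int.cast_add]
  · rw [intCast_halfNormFst_neg_one, Int.cast_add, cast_eq, cast_eq]
  · rw [intCast_halfNormSnd_neg_one, Int.cast_add, cast_eq, cast_eq]
  · simp only [intCast_norm_sectionNorm_sqrtd, Int.cast_add, cast_eq]

theorem exists_factorization_of_det_eq {m : ℤ} (hm : Odd m)
    (h : (circMatrix a).det = 64 * m) :
    ∃ k n₁ n₂ n₃,
      (sectionValues a 1 0 + sectionValues a 1 2) ^ 2 -
        (sectionValues a 1 1 + sectionValues a 1 3) ^ 2 = 8 * k ∧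
      (sectionValues a 1 0 - sectionValues a 1 2) ^ 2 +
        (sectionValues a 1 1 - sectionValues a 1 3) ^ 2 = 2 * n₁ ∧
      halfNormFst (-1) (sectionValues a (-1)) ^ 2 +
        halfNormSnd (-1) (sectionValues a (-1)) ^ 2 = 2 * n₂ ∧
      (sectionNorm a 𝕚).re ^ 2 + (sectionNorm a 𝕚).im ^ 2 = 2 * n₃ ∧
      k * n₁ * n₂ * n₃ = m := by
  obtain ⟨h₀₂, h₁₃⟩ := sectionValues_add_eq_one_of_det_eq a hm h
  have odd_add₀₂ := (odd_sectionValues_add_iff a odd_one 0 2).2 h₀₂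
  have odd_add₁₃ := (odd_sectionValues_add_iff a odd_one 1 3).2 h₁₃
  have sq_add_sq : (sectionNorm a 𝕚).re ^ 2 + (sectionNorm a 𝕚).im ^ 2 =
      (sectionNorm a 𝕚).norm := by
    rw [Zsqrtd.norm_def]
    ring
  rw [sq_add_sq]
  rw [det_circMatrix, sectionNorm, sectionNorm, quarticNorm_one, quarticNorm_neg_one] at h
  refine exists_factorization_of_mul_eq_sixtyFour_mul odd_add₀₂ odd_add₁₃ ?_ ?_ ?_ ?_ ?_ h
  · rwa [Int.odd_sub, ← Int.odd_add]
  · rwa [Int.odd_sub, ← Int.odd_add]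
  · rw [← ZMod.intCast_eq_one_iff_odd, intCast_halfNormFst_neg_one, h₀₂]
  · rw [← ZMod.intCast_eq_one_iff_odd, intCast_halfNormSnd_neg_one, h₁₃]
  · rw [← ZMod.intCast_eq_zero_iff_even, intCast_norm_sectionNorm_sqrtd, h₀₂, h₁₃]
    decide

theorem even_sum_twoExact_sectionValues {m : ℤ} (hm : Odd m) (h : (circMatrix a).det = 64 * m)
    (hfst : IsPmOneModEight (halfNormFst (-1) (sectionValues a (-1))))
    (hre : IsPmOneModEight (sectionNorm a 𝕚).re) :
    Even (∑ r, twoExact (sectionValues a 1 r)) := by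
  obtain ⟨h₀₂, h₁₃⟩ := sectionValues_add_eq_one_of_det_eq a hm h
  have even_neg_one : Even (∑ r, twoExact (sectionValues a (-1) r)) :=
    hfst.even_of_add_four_mul (isPmOneModEight_halfNormFst_neg_one_add
      ((odd_sectionValues_add_iff a odd_neg_one 0 2).2 h₀₂)
      ((odd_sectionValues_add_iff a odd_neg_one 1 3).2 h₁₃))
  have even_sqrtd : Even (∑ r, oneAddIExact (sectionValues a 𝕚 r)) := by
    rw [← gaussianParity_comp_sectionValues] at h₀₂ h₁₃
    exact hre.even_of_add_four_mul (isPmOneModEight_re_quarticNorm_sqrtd_add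
      (by rwa [map_add]) (by rwa [map_add]))
  have even_total := even_sum_exact_sectionValues a
  rwa [Int.even_add, iff_true_right even_sqrtd, Int.even_add, iff_true_right even_neg_one]
    at even_total

theorem sixtyFour_mul_notMem_S16 {m : ℕ} (hm : IsAdmissible m) : 64 * (m : ℤ) ∉ S16 := by
  rintro ⟨a, ha⟩
  have odd_m : Odd (m : ℤ) := mod_cast hm.odd
  obtain ⟨k, n₁, n₂, n₃, hk, h₁, h₂, h₃, hprod⟩ := exists_factorization_of_det_eq a odd_m ha.symm
  obtain ⟨hu, hv⟩ := hm.isPmOneModEight_of_sq_add_sq h₁ ⟨k * n₂ * n₃, by rw [← hprod]; ring⟩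
  obtain ⟨hfst, -⟩ := hm.isPmOneModEight_of_sq_add_sq h₂ ⟨k * n₁ * n₃, by rw [← hprod]; ring⟩
  obtain ⟨hre, -⟩ := hm.isPmOneModEight_of_sq_add_sq h₃ ⟨k * n₁ * n₂, by rw [← hprod]; ring⟩
  have even_sum := even_sum_twoExact_sectionValues a odd_m ha.symm hfst hre
  have odd_k : Odd k := by
    rw [← hprod, mul_assoc, mul_assoc] at odd_m
    exact (Int.odd_mul.1 odd_m).1
  have sq_sub_sq := sq_sub_sq_modEq hu hv
  rw [hk] at sq_sub_sq
  obtain ⟨j, hj⟩ := even_sum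
  obtain ⟨i, rfl⟩ := odd_k
  unfold Int.ModEq at sq_sub_sq
  omega

end TwoAdicObstruction

theorem impossible_values (r s t : ℕ) (p : Fin (r + s) → ℕ) (q : Fin t → ℕ)
    (k : Fin (r + s) → ℕ)
    (hp : ∀ i, (p i).Prime)
    (hp1 : ∀ i : Fin (r + s), (i : ℕ) < r → p i % 8 = 1 ∧
      ∃ a b : ℤ, (p i : ℤ) = a ^ 2 + b ^ 2 ∧
        (a + b ≡ 1 [ZMOD 8] ∨ a + b ≡ -1 [ZMOD 8]) ∧
        (a - b ≡ 1 [ZMOD 8] ∨ a - b ≡ -1 [ZMOD 8]))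
    (hp7 : ∀ i : Fin (r + s), r ≤ (i : ℕ) → p i % 8 = 7)
    (hq : ∀ j, (q j).Prime) (hq3 : ∀ j, q j % 8 = 3) (hqinj : Function.Injective q) :
    (64 * ∏ i, (p i : ℤ) ^ k i) ∉ S16 ∧
    (64 * (∏ i, (p i : ℤ) ^ k i) * ∏ j, (q j : ℤ)) ∉ S16 := by
  have hfree : ∀ l, l.Prime → l ∣ ∏ i, p i ^ k i → IsFreePrime l := by
    refine fun l hl => IsFreePrime.of_dvd_prod_pow (fun i _ => ?_) hl
    rcases lt_or_ge (i : ℕ) r with hi | hi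
    · obtain ⟨-, a, b, heq, hadd, hsub⟩ := hp1 i hi
      exact isFreePrime_of_sq_add_sq (hp i) heq hadd hsub
    · exact ⟨hp i, Or.inl (hp7 i hi)⟩
  have hadm := isAdmissible_mul_prod hfree hq hq3 hqinj
  constructor
  · exact_mod_cast sixtyFour_mul_notMem_S16 (hadm.of_dvd (dvd_mul_right _ _))
  · rw [mul_assoc]
    exact_mod_cast sixtyFour_mul_notMem_S16 hadm
end

section
/- For integers a_0, …, a_15, if b_0 ≢ b_2 (mod 2) and b_1 ≢ b_3 (mod 2), then N_4 ≡ N_8 · N_16 − 4(b_0 b_2 + b_1 b_3) + 2 (mod 16). -/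
/-!
The indices `l` with `gcd(l, 16) ∈ {4, 8, 16}` are those for which `ζ ^ l` is a fourth root of
unity, and at such a point `f` depends only on the four sums `b_k`. Evaluating at `±I`, `-1`, `1`,
`N_4 = (b_0 - b_2)² + (b_1 - b_3)²` and `N_8 N_16 = (b_0 + b_2)² - (b_1 + b_3)²`, so that
`N_4 = N_8 N_16 - 4 (b_0 b_2 + b_1 b_3) + 2 (b_1 + b_3)²`. The congruence follows because an odd
square is `1` modulo `8`.
-/

open Complex Finset

theorem two_mul_sq_modEq_two_of_odd {n : ℤ} (hn : Odd n) : 2 * n ^ 2 ≡ 2 [ZMOD 16] := by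
  have hsq : n ^ 2 ≡ 1 [ZMOD 8] :=
    (Int.modEq_iff_dvd.mpr (Int.eight_dvd_sq_sub_one_of_odd hn)).symm
  simpa using hsq.mul_left' (c := 2)

theorem odd_add_iff_not_modEq_two {m n : ℤ} : Odd (m + n) ↔ ¬ m ≡ n [ZMOD 2] := by
  rw [Int.odd_iff, Int.ModEq]
  omega

theorem zeta16_pow_four : zeta16 ^ 4 = I := by
  rw [zeta16, ← Complex.exp_nat_mul]
  refine Eq.trans ?_ exp_pi_div_two_mul_I
  congr 1
  push_cast
  ring

theorem zeta16_pow_eight : zeta16 ^ 8 = -1 := by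
  rw [show 8 = 4 * 2 from rfl, pow_mul, zeta16_pow_four, I_sq]

theorem zeta16_pow_twelve : zeta16 ^ 12 = -I := by
  rw [show 12 = 4 * 3 from rfl, pow_mul, zeta16_pow_four, I_pow_three]

theorem fpoly_of_pow_four_eq_one (a : Fin 16 → ℤ) {x : ℂ} (hx : x ^ 4 = 1) :
    fpoly a x = bcoef a 0 + bcoef a 1 * x + bcoef a 2 * x ^ 2 + bcoef a 3 * x ^ 3 := by
  have hreduce : fpoly a x = ∑ k : Fin 16, (a k : ℂ) * x ^ ((k : ℕ) % 4) :=
    sum_congr rfl fun k _ ↦ by rw [pow_eq_pow_mod _ hx]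
  rw [hreduce]
  simp [bcoef, Fin.sum_univ_succ, Fin.succ]
  ring

theorem fpoly_of_sq_eq_one (a : Fin 16 → ℤ) {x : ℂ} (hx : x ^ 2 = 1) :
    fpoly a x = (bcoef a 0 + bcoef a 2) + (bcoef a 1 + bcoef a 3) * x := by
  rw [fpoly_of_pow_four_eq_one a (by linear_combination (x ^ 2 + 1) * hx)]
  linear_combination (bcoef a 2 + bcoef a 3 * x) * hx

theorem fpoly_of_sq_eq_neg_one (a : Fin 16 → ℤ) {x : ℂ} (hx : x ^ 2 = -1) :
    fpoly a x = (bcoef a 0 - bcoef a 2) + (bcoef a 1 - bcoef a 3) * x := by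
  rw [fpoly_of_pow_four_eq_one a (by linear_combination (x ^ 2 - 1) * hx)]
  linear_combination (bcoef a 2 + bcoef a 3 * x) * hx

theorem Nprod_sixteen (a : Fin 16 → ℤ) :
    Nprod a 16 = (bcoef a 0 + bcoef a 2) + (bcoef a 1 + bcoef a 3) := by
  have hindex : {l ∈ range 16 | Nat.gcd l 16 = 16} = {0} := by decide
  rw [Nprod, hindex, prod_singleton, pow_zero, fpoly_of_sq_eq_one a (one_pow 2), mul_one]

theorem Nprod_eight (a : Fin 16 → ℤ) :
    Nprod a 8 = (bcoef a 0 + bcoef a 2) - (bcoef a 1 + bcoef a 3) := by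
  have hindex : {l ∈ range 16 | Nat.gcd l 16 = 8} = {8} := by decide
  rw [Nprod, hindex, prod_singleton, zeta16_pow_eight, fpoly_of_sq_eq_one a neg_one_sq,
    mul_neg_one, sub_eq_add_neg]

theorem Nprod_four (a : Fin 16 → ℤ) :
    Nprod a 4 = (bcoef a 0 - bcoef a 2) ^ 2 + (bcoef a 1 - bcoef a 3) ^ 2 := by
  have hindex : {l ∈ range 16 | Nat.gcd l 16 = 4} = {4, 12} := by decide
  have neg_I_sq : (-I) ^ 2 = -1 := by rw [neg_sq, I_sq]
  rw [Nprod, hindex, prod_pair (by norm_num), zeta16_pow_four, zeta16_pow_twelve,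
    fpoly_of_sq_eq_neg_one a I_sq, fpoly_of_sq_eq_neg_one a neg_I_sq]
  linear_combination -((bcoef a 1 - bcoef a 3) ^ 2 : ℂ) * I_sq

theorem Nprod_four_eq_Nprod_eight_mul_Nprod_sixteen (a : Fin 16 → ℤ) :
    Nprod a 4 = Nprod a 8 * Nprod a 16 - 4 * (bcoef a 0 * bcoef a 2 + bcoef a 1 * bcoef a 3) +
      2 * (bcoef a 1 + bcoef a 3) ^ 2 := by
  rw [Nprod_four, Nprod_eight, Nprod_sixteen]
  ring

theorem N4_cong_mod_sixteen_general (a : Fin 16 → ℤ)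
    (N4 N8 N16 : ℤ)
    (h4 : (N4 : ℂ) = Nprod a 4) (h8 : (N8 : ℂ) = Nprod a 8) (h16 : (N16 : ℂ) = Nprod a 16)
    (hb13 : ¬ bcoef a 1 ≡ bcoef a 3 [ZMOD 2]) :
    N4 ≡ N8 * N16 - 4 * (bcoef a 0 * bcoef a 2 + bcoef a 1 * bcoef a 3) + 2 [ZMOD 16] := by
  have hN4 : N4 = N8 * N16 - 4 * (bcoef a 0 * bcoef a 2 + bcoef a 1 * bcoef a 3) +
      2 * (bcoef a 1 + bcoef a 3) ^ 2 := by
    have h := Nprod_four_eq_Nprod_eight_mul_Nprod_sixteen a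
    rw [← h4, ← h8, ← h16] at h
    exact_mod_cast h
  rw [hN4]
  exact (two_mul_sq_modEq_two_of_odd (odd_add_iff_not_modEq_two.mpr hb13)).add_left _

theorem N4_cong_mod_sixteen (a : Fin 16 → ℤ)
    (N4 N8 N16 : ℤ)
    (h4 : (N4 : ℂ) = Nprod a 4) (h8 : (N8 : ℂ) = Nprod a 8) (h16 : (N16 : ℂ) = Nprod a 16)
    (hb02 : ¬ bcoef a 0 ≡ bcoef a 2 [ZMOD 2]) (hb13 : ¬ bcoef a 1 ≡ bcoef a 3 [ZMOD 2]) :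
    N4 ≡ N8 * N16 - 4 * (bcoef a 0 * bcoef a 2 + bcoef a 1 * bcoef a 3) + 2 [ZMOD 16] :=
  N4_cong_mod_sixteen_general a N4 N8 N16 h4 h8 h16 hb13
end

section
/- For integers a_0, …, a_15, if c_0 ≢ c_2 (mod 2) and c_1 ≢ c_3 (mod 2), then Re(α_2) ≡ (−1)^{c_2} + 2(c_0 c_2 + c_1 c_3) (mod 8) and Im(α_2) ≡ (−1)^{c_1} + 2(c_0 c_2 + c_1 c_3) (mod 8). -/
open Complex Finset

noncomputable def zeta8 : ℂ := Complex.exp (2 * Real.pi * Complex.I / 8)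

/-! Since `ζ₈ ^ 5 = -ζ₈` and `ζ₈ ^ 2 = i`, the product `α₂ = f(ζ₈) f(-ζ₈)` is
`(c₀ + c₂ i)² - i (c₁ + c₃ i)²`, whose real and imaginary parts are differences of two squares plus
twice a product. Modulo 8 one has `(-1) ^ y ≡ 1 - 2 y²`, so `x² - y² ≡ (-1) ^ y + 2 x y` amounts to
`(x - y)² ≡ 1`, that is, to `x - y` being odd. -/

theorem neg_one_pow_natAbs_modEq_eight (n : ℤ) :
    (-1) ^ n.natAbs ≡ 1 - 2 * n ^ 2 [ZMOD 8] := by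
  rcases Int.even_or_odd n with hn | hn
  · rw [(Int.natAbs_even.mpr hn).neg_one_pow]
    obtain ⟨k, rfl⟩ := hn
    exact Int.modEq_iff_dvd.mpr ⟨-k ^ 2, by ring⟩
  · rw [(Int.natAbs_odd.mpr hn).neg_one_pow]
    obtain ⟨k, rfl⟩ := hn
    exact Int.modEq_iff_dvd.mpr ⟨-k ^ 2 - k, by ring⟩

theorem sq_modEq_one_eight_iff_odd {n : ℤ} : n ^ 2 ≡ 1 [ZMOD 8] ↔ Odd n := by
  constructor
  · intro h
    have h_two : n ^ 2 ≡ 1 [ZMOD 2] := h.of_dvd (by norm_num)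
    exact (Int.odd_pow' two_ne_zero).mp (Int.odd_iff.mpr h_two)
  · exact fun h => (Int.modEq_iff_dvd.mpr (Int.eight_dvd_sq_sub_one_of_odd h)).symm

theorem sq_sub_sq_add_modEq_eight_iff {x y t : ℤ} :
    x ^ 2 - y ^ 2 + 2 * t ≡ (-1) ^ y.natAbs + 2 * (x * y + t) [ZMOD 8] ↔ ¬ x ≡ y [ZMOD 2] := by
  have h_sign : (-1) ^ y.natAbs + 2 * (x * y + t) ≡ 1 - 2 * y ^ 2 + 2 * (x * y + t) [ZMOD 8] :=
    (neg_one_pow_natAbs_modEq_eight y).add_right _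
  calc x ^ 2 - y ^ 2 + 2 * t ≡ (-1) ^ y.natAbs + 2 * (x * y + t) [ZMOD 8]
      ↔ x ^ 2 - y ^ 2 + 2 * t ≡ 1 - 2 * y ^ 2 + 2 * (x * y + t) [ZMOD 8] :=
        ⟨fun h => h.trans h_sign, fun h => h.trans h_sign.symm⟩
    _ ↔ (x - y) ^ 2 ≡ 1 [ZMOD 8] := by
        simp only [Int.modEq_iff_dvd]
        ring_nf
    _ ↔ Odd (x - y) := sq_modEq_one_eight_iff_odd
    _ ↔ ¬ x ≡ y [ZMOD 2] := by
        rw [← Int.not_even_iff_odd, even_iff_two_dvd, ← Int.modEq_iff_dvd, Int.modEq_comm]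

theorem exists_intCast_eq_add_mul_iff_modEq {R : Type*} [AddGroupWithOne R] [CharZero R]
    {s r n : ℤ} : (∃ m : ℤ, (s : R) = ((r + n * m : ℤ) : R)) ↔ s ≡ r [ZMOD n] := by
  simp only [Int.cast_inj]
  exact Int.modEq_iff_add_fac.symm.trans Int.modEq_comm

theorem fpoly_eq_of_pow_four_eq_neg_one (a : Fin 16 → ℤ) {z : ℂ} (hz : z ^ 4 = -1) :
    fpoly a z = ccoef a 0 + ccoef a 1 * z + ccoef a 2 * z ^ 2 + ccoef a 3 * z ^ 3 := by
  have pow_add_four (k : ℕ) : z ^ (k + 4) = -z ^ k := by rw [pow_add, hz, mul_neg_one]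
  simp only [fpoly, Fin.sum_univ_ofNat, Fin.isValue, Fin.coe_ofNat_eq_mod, Nat.reduceMod,
    Nat.zero_mod, Nat.one_mod, Nat.mod_succ, Fin.reduceAdd, zero_add, pow_add_four, pow_zero,
    pow_one, ccoef, Int.cast_sub, Int.cast_add]
  ring

theorem fpoly_mul_fpoly_neg (a : Fin 16 → ℤ) {z : ℂ} (hz : z ^ 4 = -1) :
    fpoly a z * fpoly a (-z) =
      (ccoef a 0 ^ 2 - ccoef a 2 ^ 2 + 2 * (ccoef a 1 * ccoef a 3) : ℤ) +
      (ccoef a 3 ^ 2 - ccoef a 1 ^ 2 + 2 * (ccoef a 0 * ccoef a 2) : ℤ) * z ^ 2 := by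
  have hz_neg : (-z) ^ 4 = -1 := by rw [Even.neg_pow (by decide), hz]
  rw [fpoly_eq_of_pow_four_eq_neg_one a hz, fpoly_eq_of_pow_four_eq_neg_one a hz_neg]
  push_cast
  linear_combination ((ccoef a 2 : ℂ) ^ 2 - 2 * ccoef a 1 * ccoef a 3 - ccoef a 3 ^ 2 * z ^ 2) * hz

theorem zeta8_sq : zeta8 ^ 2 = I :=
  calc zeta8 ^ 2 = exp (Real.pi / 2 * I) := by rw [zeta8, ← exp_nat_mul]; ring_nf
    _ = I := exp_pi_div_two_mul_I

theorem zeta8_pow_four : zeta8 ^ 4 = -1 := by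
  rw [pow_mul zeta8 2 2, zeta8_sq, I_sq]

theorem zeta8_pow_five : zeta8 ^ 5 = -zeta8 := by
  rw [pow_succ, zeta8_pow_four, neg_one_mul]

theorem alpha2_eq (a : Fin 16 → ℤ) :
    fpoly a zeta8 * fpoly a (zeta8 ^ 5) =
      (ccoef a 0 ^ 2 - ccoef a 2 ^ 2 + 2 * (ccoef a 1 * ccoef a 3) : ℤ) +
      (ccoef a 3 ^ 2 - ccoef a 1 ^ 2 + 2 * (ccoef a 0 * ccoef a 2) : ℤ) * I := by
  rw [zeta8_pow_five, fpoly_mul_fpoly_neg a zeta8_pow_four, zeta8_sq]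

theorem alpha2_re (a : Fin 16 → ℤ) :
    (fpoly a zeta8 * fpoly a (zeta8 ^ 5)).re =
      (ccoef a 0 ^ 2 - ccoef a 2 ^ 2 + 2 * (ccoef a 1 * ccoef a 3) : ℤ) := by
  simp only [alpha2_eq, add_re, mul_I_re, intCast_re, intCast_im, neg_zero, add_zero]

theorem alpha2_im (a : Fin 16 → ℤ) :
    (fpoly a zeta8 * fpoly a (zeta8 ^ 5)).im =
      (ccoef a 3 ^ 2 - ccoef a 1 ^ 2 + 2 * (ccoef a 0 * ccoef a 2) : ℤ) := by
  simp only [alpha2_eq, add_im, mul_I_im, intCast_re, intCast_im, zero_add]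

theorem alpha2_re_im_mod_eight_general (a : Fin 16 → ℤ) :
    ((∃ m : ℤ, (fpoly a zeta8 * fpoly a (zeta8 ^ 5)).re =
      (((-1) ^ (ccoef a 2).natAbs
        + 2 * (ccoef a 0 * ccoef a 2 + ccoef a 1 * ccoef a 3) + 8 * m : ℤ) : ℝ)) ↔
      ¬ ccoef a 0 ≡ ccoef a 2 [ZMOD 2]) ∧
    ((∃ m : ℤ, (fpoly a zeta8 * fpoly a (zeta8 ^ 5)).im =
      (((-1) ^ (ccoef a 1).natAbs
        + 2 * (ccoef a 0 * ccoef a 2 + ccoef a 1 * ccoef a 3) + 8 * m : ℤ) : ℝ)) ↔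
      ¬ ccoef a 1 ≡ ccoef a 3 [ZMOD 2]) := by
  constructor
  · rw [alpha2_re, exists_intCast_eq_add_mul_iff_modEq]
    exact sq_sub_sq_add_modEq_eight_iff
  · rw [alpha2_im, exists_intCast_eq_add_mul_iff_modEq, add_comm (ccoef a 0 * ccoef a 2),
      mul_comm (ccoef a 1), Int.modEq_comm (a := ccoef a 1)]
    exact sq_sub_sq_add_modEq_eight_iff

theorem alpha2_re_im_mod_eight (a : Fin 16 → ℤ)
    (hc02 : ¬ ccoef a 0 ≡ ccoef a 2 [ZMOD 2]) (hc13 : ¬ ccoef a 1 ≡ ccoef a 3 [ZMOD 2]) :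
    (∃ m : ℤ, (fpoly a zeta8 * fpoly a (zeta8 ^ 5)).re =
      (((-1) ^ (ccoef a 2).natAbs
        + 2 * (ccoef a 0 * ccoef a 2 + ccoef a 1 * ccoef a 3) + 8 * m : ℤ) : ℝ)) ∧
    (∃ m : ℤ, (fpoly a zeta8 * fpoly a (zeta8 ^ 5)).im =
      (((-1) ^ (ccoef a 1).natAbs
        + 2 * (ccoef a 0 * ccoef a 2 + ccoef a 1 * ccoef a 3) + 8 * m : ℤ) : ℝ)) := by
  have ⟨h_re, h_im⟩ := alpha2_re_im_mod_eight_general a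
  exact ⟨h_re.mpr hc02, h_im.mpr hc13⟩
end

section
/- For integers a_0, …, a_15, if e_0 + e_4 ≢ e_2 + e_6 (mod 2) and e_1 + e_5 ≢ e_3 + e_7 (mod 2), then 2(e_0 e_4 + e_2 e_6 + e_1 e_5 + e_3 e_7) ≡ b_0 b_2 + b_1 b_3 + c_0 c_2 + c_1 c_3 (mod 4). -/
open Complex Finset

/-!
The integers `a k + a (k + 8)` and `a k - a (k + 8)` have the same parity, and
`b k * b l + c k * c l` is twice a sum of products of integers of the first kind, so the `e`'s
determine it modulo 4. The theorem splits into the pairs `(k, l) = (0, 2)` and `(1, 3)`, and for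
each pair it reduces to `(e k - e (l + 4)) * (e (k + 4) - e l)` being even, which holds because the
factors have an odd sum.
-/

theorem add_modEq_two_ecoef (a : Fin 16 → ℤ) (k : Fin 16) :
    a k + a (k + 8) ≡ ecoef a k [ZMOD 2] :=
  Int.modEq_iff_dvd.2 ⟨-a (k + 8), by unfold ecoef; ring⟩

theorem bcoef_mul_add_ccoef_mul_modEq_four (a : Fin 16 → ℤ) (k l : Fin 16) :
    bcoef a k * bcoef a l + ccoef a k * ccoef a l
      ≡ 2 * (ecoef a k * ecoef a l + ecoef a (k + 4) * ecoef a (l + 4)) [ZMOD 4] := by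
  have shift (i : Fin 16) : i + 4 + 8 = i + 12 := add_assoc i 4 8
  have parity_shift (i : Fin 16) : a (i + 4) + a (i + 12) ≡ ecoef a (i + 4) [ZMOD 2] :=
    shift i ▸ add_modEq_two_ecoef a (i + 4)
  calc
    bcoef a k * bcoef a l + ccoef a k * ccoef a l
        = 2 * ((a k + a (k + 8)) * (a l + a (l + 8))
            + (a (k + 4) + a (k + 12)) * (a (l + 4) + a (l + 12))) := by
      unfold bcoef ccoef
      ring
    _ ≡ 2 * (ecoef a k * ecoef a l + ecoef a (k + 4) * ecoef a (l + 4)) [ZMOD 4] :=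
      (((add_modEq_two_ecoef a k).mul (add_modEq_two_ecoef a l)).add
        ((parity_shift k).mul (parity_shift l))).mul_left'

theorem mul_add_mul_modEq_two_of_add_not_modEq {p q r s : ℤ}
    (h : ¬ p + q ≡ r + s [ZMOD 2]) : p * q + r * s ≡ p * r + q * s [ZMOD 2] := by
  have factor_even : 2 ∣ p - s ∨ 2 ∣ q - r := by
    unfold Int.ModEq at h
    omega
  have product_even : 2 ∣ (p - s) * (q - r) :=
    factor_even.elim (Dvd.dvd.mul_right · _) (Dvd.dvd.mul_left · _)
  have difference : p * q + r * s - (p * r + q * s) = (p - s) * (q - r) := by ring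
  exact (Int.modEq_iff_dvd.2 (difference ▸ product_even)).symm

theorem two_mul_ecoef_mul_add_mul_modEq_four (a : Fin 16 → ℤ) {k l : Fin 16}
    (h : ¬ ecoef a k + ecoef a (k + 4) ≡ ecoef a l + ecoef a (l + 4) [ZMOD 2]) :
    2 * (ecoef a k * ecoef a (k + 4) + ecoef a l * ecoef a (l + 4))
      ≡ bcoef a k * bcoef a l + ccoef a k * ccoef a l [ZMOD 4] :=
  (mul_add_mul_modEq_two_of_add_not_modEq h).mul_left'.trans
    (bcoef_mul_add_ccoef_mul_modEq_four a k l).symm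

theorem e_products_cong_mod_four (a : Fin 16 → ℤ)
    (h02 : ¬ ecoef a 0 + ecoef a 4 ≡ ecoef a 2 + ecoef a 6 [ZMOD 2])
    (h13 : ¬ ecoef a 1 + ecoef a 5 ≡ ecoef a 3 + ecoef a 7 [ZMOD 2]) :
    2 * (ecoef a 0 * ecoef a 4 + ecoef a 2 * ecoef a 6 + ecoef a 1 * ecoef a 5
        + ecoef a 3 * ecoef a 7)
      ≡ bcoef a 0 * bcoef a 2 + bcoef a 1 * bcoef a 3
        + ccoef a 0 * ccoef a 2 + ccoef a 1 * ccoef a 3 [ZMOD 4] := by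
  calc
    _ = 2 * (ecoef a 0 * ecoef a 4 + ecoef a 2 * ecoef a 6)
        + 2 * (ecoef a 1 * ecoef a 5 + ecoef a 3 * ecoef a 7) := by ring
    _ ≡ (bcoef a 0 * bcoef a 2 + ccoef a 0 * ccoef a 2)
        + (bcoef a 1 * bcoef a 3 + ccoef a 1 * ccoef a 3) [ZMOD 4] :=
      (two_mul_ecoef_mul_add_mul_modEq_four a (k := 0) (l := 2) h02).add
        (two_mul_ecoef_mul_add_mul_modEq_four a (k := 1) (l := 3) h13)
    _ = _ := by ring
end

section
/- Let p_1, …, p_r be primes such that for each 1 ≤ i ≤ r there are integers a_i, b_i with p_i = a_i² + b_i² ≡ 1 (mod 8) and both a_i + b_i and a_i − b_i congruent to 1 or −1 modulo 8; let p_{r+1}, …, p_{r+s} be primes each congruent to 7 (mod 8); and let k_1, …, k_{r+s} be non-negative integers. If α ∈ ℤ[i] satisfies α · conj(α) = 2 · p_1^{k_1} ⋯ p_r^{k_r} · p_{r+1}^{2k_{r+1}} ⋯ p_{r+s}^{2k_{r+s}}, then both Re(α) and Im(α) are congruent to 1 or −1 modulo 8. -/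
/-!
In `ℤ[i]` the condition that `a + b` and `a - b` are `±1` modulo `m` says that `a + b i` is
congruent to a unit modulo the ideal of all `z` with `m ∣ z (1 + i)`. Being congruent to a unit is
multiplicative, so it passes from prime factors to products. An element of norm `2 N` is
`(1 + i) β` with `β` of norm `N`, and every prime factor of `β` is, up to units, an inert prime
`p ∣ N` or one of the factors `a ± b i` of a prime `p = a² + b²` dividing `N`. Multiplying by
`1 + i` turns the condition on `re β ± im β` into one on the real and imaginary parts.
-/

section UnitResidues

variable {R : Type*} [CommRing R] {I : Ideal R} {x y : R}

/-- The multiplicative monoid of elements of `R` that are congruent to a unit of `R` modulo `I`.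
This is stronger than being invertible modulo `I`. -/
def unitResidues (I : Ideal R) : Submonoid R :=
  ((IsUnit.submonoid R).map (Ideal.Quotient.mk I)).comap (Ideal.Quotient.mk I)

lemma mem_unitResidues_iff : x ∈ unitResidues I ↔ ∃ u, IsUnit u ∧ x - u ∈ I := by
  simp only [unitResidues, Submonoid.mem_comap, Submonoid.mem_map, IsUnit.mem_submonoid_iff,
    ← Ideal.Quotient.eq, eq_comm]

lemma mem_unitResidues_of_isUnit (hx : IsUnit x) : x ∈ unitResidues I :=
  mem_unitResidues_iff.2 ⟨x, hx, by simp⟩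

lemma mem_unitResidues_of_associated (h : Associated x y) (hx : x ∈ unitResidues I) :
    y ∈ unitResidues I := by
  obtain ⟨u, rfl⟩ := h
  exact mul_mem hx (mem_unitResidues_of_isUnit u.isUnit)

lemma mem_unitResidues_span_int_iff {m x : ℤ} :
    x ∈ unitResidues (Ideal.span {m}) ↔ x ≡ 1 [ZMOD m] ∨ x ≡ -1 [ZMOD m] := by
  simp only [mem_unitResidues_iff, Int.isUnit_iff, or_and_right, exists_or, exists_eq_left,
    Ideal.mem_span_singleton, Int.modEq_comm (a := x), Int.modEq_iff_dvd]

end UnitResidues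

lemma mem_submonoid_of_forall_prime_dvd {M : Type*} [CommMonoidWithZero M]
    [UniqueFactorizationMonoid M] {S : Submonoid M} (hS : ∀ u, IsUnit u → u ∈ S) {x : M}
    (hx : x ≠ 0) (h : ∀ q, Prime q → q ∣ x → q ∈ S) : x ∈ S := by
  induction x using UniqueFactorizationMonoid.induction_on_prime with
  | h₁ => exact absurd rfl hx
  | h₂ u hu => exact hS u hu
  | h₃ a q ha hq ih =>
    exact mul_mem (h q hq (dvd_mul_right q a)) (ih ha fun r hr hra ↦ h r hr (hra.mul_left q))

lemma exists_prime_nat_dvd_of_prime_dvd_natCast {R : Type*} [CommSemiring R] {q : R}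
    (hq : Prime q) {n : ℕ} (hn : n ≠ 0) (h : q ∣ n) : ∃ p : ℕ, p.Prime ∧ p ∣ n ∧ q ∣ p := by
  rw [← Nat.prod_primeFactorsList hn, Nat.cast_list_prod, hq.dvd_prod_iff] at h
  obtain ⟨_, hmem, hqp⟩ := h
  obtain ⟨p, hp, rfl⟩ := List.mem_map.1 hmem
  exact ⟨p, Nat.prime_of_mem_primeFactorsList hp, Nat.dvd_of_mem_primeFactorsList hp, hqp⟩

section GaussianInt

variable {z q : GaussianInt} {m : ℤ}

lemma gaussianInt_norm_eq_sq_add_sq (z : GaussianInt) : z.norm = z.re ^ 2 + z.im ^ 2 := by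
  rw [Zsqrtd.norm_def]
  ring

lemma gaussianInt_isUnit_iff : IsUnit z ↔ IsUnit (z.re + z.im) ∧ IsUnit (z.re - z.im) := by
  rw [← Zsqrtd.norm_eq_one_iff' (by decide), gaussianInt_norm_eq_sq_add_sq]
  constructor
  · intro hz
    have sq_add : (z.re + z.im) ^ 2 = 1 + 2 * (z.re * z.im) := by linear_combination hz
    have sq_sub : (z.re - z.im) ^ 2 = 1 - 2 * (z.re * z.im) := by linear_combination hz
    have re_mul_im : z.re * z.im = 0 := by
      linarith [sq_nonneg (z.re + z.im), sq_nonneg (z.re - z.im)]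
    exact ⟨.of_pow_eq_one (n := 2) (by simpa [re_mul_im] using sq_add) two_ne_zero,
      .of_pow_eq_one (n := 2) (by simpa [re_mul_im] using sq_sub) two_ne_zero⟩
  · rintro ⟨hadd, hsub⟩
    linarith [Int.isUnit_sq hadd, Int.isUnit_sq hsub]

lemma gaussianInt_prime_of_prime_norm (hz : Prime z.norm) : Prime z := by
  have : IsLocalHom (Zsqrtd.normMonoidHom (d := -1)) :=
    ⟨fun z hz ↦ (Zsqrtd.isUnit_iff_norm_isUnit z).2 hz⟩
  exact (Irreducible.of_map (f := Zsqrtd.normMonoidHom (d := -1)) hz.irreducible).prime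

lemma associated_or_associated_star_of_dvd_norm_s16 (hq : Prime q) (hz : Prime z.norm)
    (h : q ∣ (z.norm : GaussianInt)) : Associated q z ∨ Associated q (star z) := by
  rw [Zsqrtd.norm_eq_mul_conj] at h
  have hz' : Prime (star z).norm := by rwa [Zsqrtd.norm_conj]
  exact (hq.dvd_or_dvd h).imp (hq.associated_of_dvd (gaussianInt_prime_of_prime_norm hz))
    (hq.associated_of_dvd (gaussianInt_prime_of_prime_norm hz'))

lemma one_add_I_dvd_of_even_norm (h : Even z.norm) : (⟨1, 1⟩ : GaussianInt) ∣ z := by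
  obtain ⟨c, hc⟩ : Even (z.re + z.im) := by
    simpa [gaussianInt_norm_eq_sq_add_sq, parity_simps] using h
  have him : z.im = c + c - z.re := eq_sub_of_add_eq' hc
  refine ⟨⟨c, c - z.re⟩, Zsqrtd.ext ?_ ?_⟩
  · simp
  · simp [him, add_comm, add_sub_assoc]

/-- The ideal of Gaussian integers `z` for which `z (1 + i)` is divisible by `m`. For `m = 8` it is
generated by `4 (1 + i)`. -/
def oneAddIColon (m : ℤ) : Ideal GaussianInt :=
  (Ideal.span {(m : GaussianInt)}).colon {⟨1, 1⟩}

lemma mem_oneAddIColon_iff : z ∈ oneAddIColon m ↔ m ∣ z.re + z.im ∧ m ∣ z.re - z.im := by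
  rw [oneAddIColon, Submodule.mem_colon_singleton, smul_eq_mul, Ideal.mem_span_singleton,
    Zsqrtd.intCast_dvd, and_comm]
  simp [sub_eq_add_neg]

lemma mem_unitResidues_oneAddIColon_iff :
    z ∈ unitResidues (oneAddIColon m) ↔
      z.re + z.im ∈ unitResidues (Ideal.span {m}) ∧
        z.re - z.im ∈ unitResidues (Ideal.span {m}) := by
  simp only [mem_unitResidues_iff, mem_oneAddIColon_iff, gaussianInt_isUnit_iff,
    Ideal.mem_span_singleton, Zsqrtd.re_sub, Zsqrtd.im_sub]
  constructor
  · rintro ⟨u, ⟨hadd, hsub⟩, hdvd_add, hdvd_sub⟩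
    exact ⟨⟨_, hadd, by rwa [add_sub_add_comm]⟩, ⟨_, hsub, by rwa [sub_sub_sub_comm]⟩⟩
  · rintro ⟨⟨s, hs, hdvd_s⟩, d, hd, hdvd_d⟩
    obtain ⟨b, hb⟩ : Even (s - d) := by
      rcases Int.isUnit_iff.1 hs with rfl | rfl <;> rcases Int.isUnit_iff.1 hd with rfl | rfl <;>
        decide
    obtain rfl : s = d + b + b := by omega
    refine ⟨⟨d + b, b⟩, ⟨hs, by simpa using hd⟩, ?_, ?_⟩
    · rwa [← add_sub_add_comm]
    · simpa [sub_sub_sub_comm] using hdvd_d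

lemma star_mem_unitResidues_oneAddIColon (hz : z ∈ unitResidues (oneAddIColon m)) :
    star z ∈ unitResidues (oneAddIColon m) := by
  rw [mem_unitResidues_oneAddIColon_iff] at hz ⊢
  simpa [sub_eq_add_neg] using hz.symm

lemma natCast_mem_unitResidues_oneAddIColon {p : ℕ} (hp : (p : ℤ) ≡ 1 [ZMOD m] ∨ p ≡ -1 [ZMOD m]) :
    (p : GaussianInt) ∈ unitResidues (oneAddIColon m) := by
  simpa [mem_unitResidues_oneAddIColon_iff, mem_unitResidues_span_int_iff] using hp

lemma mem_unitResidues_of_forall_prime_dvd_norm (hz : z ≠ 0)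
    (h : ∀ p : ℕ, p.Prime → (p : ℤ) ∣ z.norm →
      (∃ w : GaussianInt, w.norm = p ∧ w ∈ unitResidues (oneAddIColon m)) ∨
        p % 4 = 3 ∧ (p : GaussianInt) ∈ unitResidues (oneAddIColon m)) :
    z ∈ unitResidues (oneAddIColon m) := by
  refine mem_submonoid_of_forall_prime_dvd (fun _ ↦ mem_unitResidues_of_isUnit) hz fun q hq hqz ↦ ?_
  have hq_norm : q ∣ ((z.norm.natAbs : ℕ) : GaussianInt) := by
    rw [GaussianInt.natCast_natAbs_norm, Zsqrtd.norm_eq_mul_conj]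
    exact hqz.mul_right _
  have hnorm : z.norm.natAbs ≠ 0 := by simpa [GaussianInt.norm_eq_zero] using hz
  obtain ⟨p, hp, hpz, hqp⟩ := exists_prime_nat_dvd_of_prime_dvd_natCast hq hnorm hq_norm
  obtain ⟨w, hw, hmem⟩ | ⟨hp4, hmem⟩ := h p hp (Int.natCast_dvd.2 hpz)
  · have hw_prime : Prime w.norm := hw ▸ Nat.prime_iff_prime_int.1 hp
    have hqw : q ∣ (w.norm : GaussianInt) := by simpa [hw] using hqp
    obtain hassoc | hassoc := associated_or_associated_star_of_dvd_norm_s16 hq hw_prime hqw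
    · exact mem_unitResidues_of_associated hassoc.symm hmem
    · exact mem_unitResidues_of_associated hassoc.symm (star_mem_unitResidues_oneAddIColon hmem)
  · have : Fact p.Prime := ⟨hp⟩
    have hp_prime := GaussianInt.prime_of_nat_prime_of_mod_four_eq_three p hp4
    exact mem_unitResidues_of_associated (hq.associated_of_dvd hp_prime hqp).symm hmem

end GaussianInt

theorem gaussian_int_norm_re_im_mod_eight_general (m : ℤ) {N : ℕ} (hN : N ≠ 0)
    (h : ∀ p : ℕ, p.Prime → p ∣ N →
      (∃ a b : ℤ, (p : ℤ) = a ^ 2 + b ^ 2 ∧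
        (a + b ≡ 1 [ZMOD m] ∨ a + b ≡ -1 [ZMOD m]) ∧
        (a - b ≡ 1 [ZMOD m] ∨ a - b ≡ -1 [ZMOD m])) ∨
      p % 4 = 3 ∧ ((p : ℤ) ≡ 1 [ZMOD m] ∨ p ≡ -1 [ZMOD m]))
    {α : GaussianInt} (hα : α.norm = 2 * N) :
    (α.re ≡ 1 [ZMOD m] ∨ α.re ≡ -1 [ZMOD m]) ∧
    (α.im ≡ 1 [ZMOD m] ∨ α.im ≡ -1 [ZMOD m]) := by
  obtain ⟨β, rfl⟩ := one_add_I_dvd_of_even_norm (hα ▸ even_two_mul (N : ℤ))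
  have hβ : β.norm = N := by
    rw [Zsqrtd.norm_mul] at hα
    exact mul_left_cancel₀ two_ne_zero hα
  have hβ_ne : β ≠ 0 := by
    rintro rfl
    exact hN (by simpa using hβ.symm)
  have hmem : β ∈ unitResidues (oneAddIColon m) := by
    refine mem_unitResidues_of_forall_prime_dvd_norm hβ_ne fun p hp hpβ ↦ ?_
    rw [hβ, Int.natCast_dvd_natCast] at hpβ
    refine (h p hp hpβ).imp ?_ (And.imp_right natCast_mem_unitResidues_oneAddIColon)
    rintro ⟨a, b, hab, hadd, hsub⟩
    refine ⟨⟨a, b⟩, by rw [gaussianInt_norm_eq_sq_add_sq, hab], ?_⟩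
    simpa only [mem_unitResidues_oneAddIColon_iff, mem_unitResidues_span_int_iff] using
      ⟨hadd, hsub⟩
  simpa [mem_unitResidues_oneAddIColon_iff, mem_unitResidues_span_int_iff, and_comm,
    sub_eq_add_neg, add_comm β.im] using hmem

theorem gaussian_int_norm_re_im_mod_eight (r s : ℕ) (p : Fin (r + s) → ℕ)
    (k : Fin (r + s) → ℕ)
    (hp : ∀ i, (p i).Prime)
    (hp1 : ∀ i : Fin (r + s), (i : ℕ) < r → p i % 8 = 1 ∧
      ∃ a b : ℤ, (p i : ℤ) = a ^ 2 + b ^ 2 ∧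
        (a + b ≡ 1 [ZMOD 8] ∨ a + b ≡ -1 [ZMOD 8]) ∧
        (a - b ≡ 1 [ZMOD 8] ∨ a - b ≡ -1 [ZMOD 8]))
    (hp7 : ∀ i : Fin (r + s), r ≤ (i : ℕ) → p i % 8 = 7)
    (α : GaussianInt)
    (hα : α * star α =
      ((2 * ∏ i, (p i : ℤ) ^ (if (i : ℕ) < r then k i else 2 * k i) : ℤ) : GaussianInt)) :
    (α.re ≡ 1 [ZMOD 8] ∨ α.re ≡ -1 [ZMOD 8]) ∧
    (α.im ≡ 1 [ZMOD 8] ∨ α.im ≡ -1 [ZMOD 8]) := by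
  set e : Fin (r + s) → ℕ := fun i ↦ if (i : ℕ) < r then k i else 2 * k i
  have hnorm : α.norm = 2 * (∏ i, p i ^ e i : ℕ) := by
    rw [← Zsqrtd.norm_eq_mul_conj] at hα
    exact_mod_cast hα
  have hprod : ∏ i, p i ^ e i ≠ 0 :=
    Finset.prod_ne_zero_iff.2 fun i _ ↦ pow_ne_zero _ (hp i).ne_zero
  refine gaussian_int_norm_re_im_mod_eight_general 8 hprod (fun q hq hq_dvd ↦ ?_) hnorm
  obtain ⟨i, -, hqi⟩ := (hq.prime.dvd_finsetProd_iff _).1 hq_dvd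
  obtain rfl : q = p i := (Nat.prime_dvd_prime_iff_eq hq (hp i)).1 (hq.dvd_of_dvd_pow hqi)
  obtain hi | hi := lt_or_ge (i : ℕ) r
  · exact .inl (hp1 i hi).2
  · have hpi := hp7 i hi
    refine .inr ⟨by omega, .inr ?_⟩
    rw [Int.modEq_iff_dvd]
    omega
end

section
/- If p is a prime with p ≡ 5 (mod 8), then 64p ∈ S(16). -/
open Complex Finset

/-!
For `f = ∑ aₖ xᵏ` the circulant determinant of order `16` is `∏ f(ζ)` over the sixteenth roots of
unity `ζ`. Splitting `x¹⁶ - 1 = (x⁸ + 1)(x⁴ + 1)(x² + 1)(x + 1)(x - 1)` makes it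
`f(1) f(-1) |f(i)|²` times the norms of `f` modulo `x⁴ + 1` and `x⁸ + 1`; each single factorization
`x²ⁿ - 1 = (xⁿ - 1)(xⁿ + 1)` is a block triangularization over `ℤ`.

Now take `f = 1 + x + (x⁴ + 1)(x⁸ + 1)((m + n x)(1 - x²) - 1)`. Modulo `x⁴ + 1` and `x⁸ + 1` this is
`1 + x`, of norm `2`, while `f(1) = -2`, `f(-1) = -4` and `f(i) = (8m - 3) + (8n + 1) i`. So
`32 ((8m - 3)² + (8n + 1)²)` is a determinant of order `16`. A prime `p ≡ 5 (mod 8)` is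
`x² + y²`, and `2p = (x + y)² + (x - y)²`, where up to order and signs the two summands are squares
of integers `≡ -3` and `≡ 1 (mod 8)`.
-/

open Matrix

/-- The negacirculant matrix with first column `v`: multiplication by `∑ vₖ xᵏ` modulo `xⁿ + 1`
in the basis `1, x, …, xⁿ⁻¹`. The subtraction `i - j` is modulo `n`. -/
def negacirculant {R : Type*} [Neg R] {n : ℕ} (v : Fin n → R) : Matrix (Fin n) (Fin n) R :=
  of fun i j => if j ≤ i then v (i - j) else -v (i - j)

section CirculantDeterminant

variable {R : Type*} [CommRing R]

theorem det_fromBlocks_swap {m : Type*} [Fintype m] [DecidableEq m] (A B : Matrix m m R) :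
    (fromBlocks A B B A).det = (A + B).det * (A - B).det := by
  have triangularization : fromBlocks 1 1 0 1 * fromBlocks A B B A * fromBlocks 1 (-1) 0 1 =
      fromBlocks (A + B) 0 B (A - B) := by
    simp only [fromBlocks_multiply]
    congr 1 <;> simp <;> abel
  simpa using congrArg det triangularization

theorem det_circulant_add_self {n : ℕ} (v : Fin (n + n) → R) :
    (circulant v).det =
      (circulant fun k : Fin n => v (k.castAdd n) + v (k.natAdd n)).det *
        (negacirculant fun k : Fin n => v (k.castAdd n) - v (k.natAdd n)).det := by
  set A : Matrix (Fin n) (Fin n) R := of fun i j =>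
    if j ≤ i then v ((i - j).castAdd n) else v ((i - j).natAdd n) with hA
  set B : Matrix (Fin n) (Fin n) R := of fun i j =>
    if j ≤ i then v ((i - j).natAdd n) else v ((i - j).castAdd n) with hB
  have hblocks : (circulant v).submatrix finSumFinEquiv finSumFinEquiv = fromBlocks A B B A := by
    ext (i | i) (j | j) <;>
    by_cases h : j ≤ i <;>
    simp only [hA, hB, h, submatrix_apply, circulant_apply, finSumFinEquiv_apply_left,
      finSumFinEquiv_apply_right, fromBlocks_apply₁₁, fromBlocks_apply₁₂, fromBlocks_apply₂₁,
      fromBlocks_apply₂₂, of_apply, if_true, if_false] <;>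
    congr 1 <;> grind [Fin.sub_val_of_le, Fin.coe_sub_iff_lt]
  have hadd : A + B = circulant fun k : Fin n => v (k.castAdd n) + v (k.natAdd n) := by
    ext i j
    by_cases h : j ≤ i <;> simp [hA, hB, h, add_comm]
  have hsub : A - B = negacirculant fun k : Fin n => v (k.castAdd n) - v (k.natAdd n) := by
    ext i j
    by_cases h : j ≤ i <;> simp [hA, hB, h, negacirculant]
  rw [← det_submatrix_equiv_self finSumFinEquiv, hblocks, det_fromBlocks_swap, hadd, hsub]

theorem det_circulant_two (v : Fin 2 → R) : (circulant v).det = (v 0 + v 1) * (v 0 - v 1) := by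
  have neg_one : (-1 : Fin 2) = 1 := rfl
  simp only [det_fin_two, circulant_apply, sub_self, sub_zero, zero_sub, neg_one]
  ring

theorem det_negacirculant_two (v : Fin 2 → R) : (negacirculant v).det = v 0 ^ 2 + v 1 ^ 2 := by
  have neg_one : (-1 : Fin 2) = 1 := rfl
  simp only [det_fin_two, negacirculant, of_apply, le_refl, Fin.zero_le,
    Fin.not_le.2 Fin.zero_lt_one, if_true, if_false, sub_self, sub_zero, zero_sub, neg_one]
  ring

theorem det_circulant_four (v : Fin 4 → R) :
    (circulant v).det =
      (v 0 + v 1 + v 2 + v 3) * (v 0 - v 1 + v 2 - v 3) * ((v 0 - v 2) ^ 2 + (v 1 - v 3) ^ 2) := by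
  rw [det_circulant_add_self (n := 2), det_circulant_two, det_negacirculant_two]
  change ((v 0 + v 2) + (v 1 + v 3)) * ((v 0 + v 2) - (v 1 + v 3)) *
    ((v 0 - v 2) ^ 2 + (v 1 - v 3) ^ 2) = _
  ring

theorem fin_sub_eq_one_iff {n : ℕ} {i j : Fin (n + 2)} :
    i - j = 1 ↔ (i : ℕ) = j + 1 ∨ i = 0 ∧ j = Fin.last (n + 1) := by
  simp only [Fin.ext_iff, Fin.val_one, Fin.val_zero, Fin.val_last]
  rcases le_or_gt j i with h | h
  · rw [Fin.sub_val_of_le h]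
    lia
  · rw [Fin.coe_sub_iff_lt.2 h]
    lia

theorem negacirculant_single_add_single_apply {n : ℕ} (a b : R) (i j : Fin (n + 2)) :
    negacirculant (Pi.single 0 a + Pi.single 1 b) i j =
      if i = j then a else if (i : ℕ) = j + 1 then b else
        if i = 0 ∧ j = Fin.last (n + 1) then -b else 0 := by
  simp only [negacirculant, of_apply, Pi.add_apply, Pi.single_apply, sub_eq_zero,
    fin_sub_eq_one_iff]
  by_cases i = j <;> by_cases (i : ℕ) = j + 1 <;> by_cases i = 0 ∧ j = Fin.last (n + 1) <;>
    grind

theorem det_negacirculant_single_add_single {n : ℕ} (a b : R) :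
    (negacirculant (Pi.single 0 a + Pi.single 1 b : Fin (n + 2) → R)).det =
      a ^ (n + 2) + (-b) ^ (n + 2) := by
  have entry := negacirculant_single_add_single_apply (n := n) a b
  generalize negacirculant (Pi.single 0 a + Pi.single 1 b : Fin (n + 2) → R) = M at entry
  have first_minor : (M.submatrix Fin.succ (Fin.succAbove 0)).det = a ^ (n + 1) := by
    rw [det_of_isLowerTriangular]
    · simp [entry]
    · intro i j (hij : i < j)
      simp only [submatrix_apply, Fin.succAbove_zero, entry]
      grind
  have last_minor :
      (M.submatrix Fin.succ (Fin.succAbove (Fin.last (n + 1)))).det = b ^ (n + 1) := by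
    rw [det_of_isUpperTriangular]
    · simp [entry, Fin.ext_iff]
    · intro i j (hij : j < i)
      simp only [submatrix_apply, Fin.succAbove_last, entry]
      grind
  have first_entry : M 0 0 = a := by simp [entry]
  have middle_entry (j : Fin n) : M 0 j.castSucc.succ = 0 := by grind
  have last_entry : M 0 (Fin.last (n + 1)) = -b := by simp [entry, Fin.ext_iff]
  rw [det_succ_row_zero, Fin.sum_univ_succ, Fin.sum_univ_castSucc, Fin.succ_last, first_minor,
    last_minor]
  simp only [first_entry, middle_entry, last_entry, Fin.val_zero, Fin.val_last, mul_zero, zero_mul,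
    Finset.sum_const_zero, Nat.succ_eq_add_one]
  ring

end CirculantDeterminant

theorem det_circMatrix_s17 (a : Fin 16 → ℤ) :
    (circMatrix a).det =
      (circulant fun k : Fin 4 => bcoef a (k.castLE (by decide))).det *
        (negacirculant fun k : Fin 4 => ccoef a (k.castLE (by decide))).det *
        (negacirculant fun k : Fin 8 => ecoef a (k.castLE (by decide))).det := by
  change (circulant a).det = _
  rw [det_circulant_add_self (n := 8), det_circulant_add_self (n := 4)]
  congr! with k k k <;> fin_cases k <;> rfl

/-- The coefficients of `1 + x + (x⁴ + 1)(x⁸ + 1)((m + n x)(1 - x²) - 1)`, a polynomial congruent to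
`1 + x` modulo `x⁴ + 1` and modulo `x⁸ + 1` that takes the value `(8m - 3) + (8n + 1) i` at `i`. -/
def gaussianFamily (m n : ℤ) : Fin 16 → ℤ :=
  ![m, n + 1, -m, -n, m - 1, n, -m, -n, m - 1, n, -m, -n, m - 1, n, -m, -n]

theorem bcoef_gaussianFamily (m n : ℤ) :
    (fun k : Fin 4 => bcoef (gaussianFamily m n) (k.castLE (by decide))) =
      ![4 * m - 3, 4 * n + 1, -(4 * m), -(4 * n)] := by
  ext k
  fin_cases k <;> simp [bcoef, gaussianFamily] <;> ring

theorem ccoef_gaussianFamily (m n : ℤ) :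
    (fun k : Fin 4 => ccoef (gaussianFamily m n) (k.castLE (by decide))) =
      Pi.single 0 1 + Pi.single 1 1 := by
  ext k
  fin_cases k <;> simp [ccoef, gaussianFamily]

theorem ecoef_gaussianFamily (m n : ℤ) :
    (fun k : Fin 8 => ecoef (gaussianFamily m n) (k.castLE (by decide))) =
      Pi.single 0 1 + Pi.single 1 1 := by
  ext k
  fin_cases k <;> simp [ecoef, gaussianFamily]

theorem det_circMatrix_gaussianFamily (m n : ℤ) :
    (circMatrix (gaussianFamily m n)).det = 32 * ((8 * m - 3) ^ 2 + (8 * n + 1) ^ 2) := by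
  rw [det_circMatrix_s17, bcoef_gaussianFamily, ccoef_gaussianFamily, ecoef_gaussianFamily,
    det_circulant_four, det_negacirculant_single_add_single, det_negacirculant_single_add_single]
  simp only [Matrix.cons_val]
  ring

theorem exists_sq_eq_sq_of_intCast_eq_or_eq_neg {N : ℕ} {x r : ℤ}
    (h : (x : ZMod N) = r ∨ (x : ZMod N) = -r) : ∃ k : ℤ, (N * k + r) ^ 2 = x ^ 2 := by
  rcases h with h | h
  · obtain ⟨k, hk⟩ := (ZMod.intCast_eq_intCast_iff_dvd_sub r x N).1 h.symm
    exact ⟨k, by rw [← hk]; ring⟩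
  · obtain ⟨k, hk⟩ := (ZMod.intCast_eq_intCast_iff_dvd_sub (-r) x N).1 (by simp [h])
    exact ⟨-k, by linear_combination (-N * k + r - x) * hk⟩

theorem add_sub_mod_eight_of_sq_add_sq_eq_five : ∀ x y : ZMod 8, x ^ 2 + y ^ 2 = 5 →
    (x + y = -3 ∨ x + y = 3) ∧ (x - y = 1 ∨ x - y = -1) ∨
      (x - y = -3 ∨ x - y = 3) ∧ (x + y = 1 ∨ x + y = -1) := by
  decide

theorem exists_sq_add_sq_eq_two_mul {x y : ℤ} (h : (x ^ 2 + y ^ 2) % 8 = 5) :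
    ∃ m n : ℤ, (8 * m - 3) ^ 2 + (8 * n + 1) ^ 2 = 2 * (x ^ 2 + y ^ 2) := by
  have hmod : (x : ZMod 8) ^ 2 + (y : ZMod 8) ^ 2 = 5 := by
    exact_mod_cast (ZMod.intCast_eq_intCast_iff' (x ^ 2 + y ^ 2) 5 8).2 h
  have of_residues {s t : ℤ} (hs : (s : ZMod 8) = -3 ∨ (s : ZMod 8) = 3)
      (ht : (t : ZMod 8) = 1 ∨ (t : ZMod 8) = -1) :
      ∃ m n : ℤ, (8 * m - 3) ^ 2 + (8 * n + 1) ^ 2 = s ^ 2 + t ^ 2 := by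
    obtain ⟨m, hm⟩ := exists_sq_eq_sq_of_intCast_eq_or_eq_neg (N := 8) (r := -3) (by simpa using hs)
    obtain ⟨n, hn⟩ := exists_sq_eq_sq_of_intCast_eq_or_eq_neg (N := 8) (r := 1) (by simpa using ht)
    exact ⟨m, n, by rw [← hm, ← hn]; push_cast; ring⟩
  rcases add_sub_mod_eight_of_sq_add_sq_eq_five x y hmod with ⟨hs, ht⟩ | ⟨hs, ht⟩
  · obtain ⟨m, n, hmn⟩ := of_residues (s := x + y) (t := x - y) (mod_cast hs) (mod_cast ht)
    exact ⟨m, n, by rw [hmn]; ring⟩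
  · obtain ⟨m, n, hmn⟩ := of_residues (s := x - y) (t := x + y) (mod_cast hs) (mod_cast ht)
    exact ⟨m, n, by rw [hmn]; ring⟩

theorem sixty_four_p_mem_S16_of_five_mod_eight_general {n : ℤ} (hn : ∃ x y : ℤ, x ^ 2 + y ^ 2 = n)
    (h5 : n % 8 = 5) : 64 * n ∈ S16 := by
  obtain ⟨x, y, rfl⟩ := hn
  obtain ⟨m, k, hmk⟩ := exists_sq_add_sq_eq_two_mul h5
  refine ⟨gaussianFamily m k, ?_⟩
  rw [det_circMatrix_gaussianFamily, hmk]
  ring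

theorem sixty_four_p_mem_S16_of_five_mod_eight (p : ℕ) (hp : p.Prime) (h5 : p % 8 = 5) :
    (64 * p : ℤ) ∈ S16 := by
  have : Fact p.Prime := ⟨hp⟩
  obtain ⟨x, y, hxy⟩ := Nat.Prime.sq_add_sq (p := p) (by lia)
  exact sixty_four_p_mem_S16_of_five_mod_eight_general ⟨x, y, mod_cast hxy⟩ (by lia)
end

section
/- If p is a prime with p ≡ 3 (mod 8), then 64p² ∈ S(16). -/
open Complex Finset

/-! The circulant determinant of order `16` with coefficients `a` is the product of `f(w) = ∑ aₖ wᵏ`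
over the sixteenth roots of unity `w`. For `f = 1 + X + X² + X¹⁰` the primitive roots of order `1`,
`2`, `4` and `16` contribute `4`, `2`, `2` and `2`. Adding a multiple of `(1 - X⁴)(1 + X⁸)` changes
the values only at the primitive eighth roots of unity `w`. There the multiple can be chosen so that
the value becomes `(1 + w) w² (x - y √-2)` for any prescribed `x ≡ y ≡ 1 (mod 4)`, and these values
contribute `2 (x² + 2y²)²`. A prime `p ≡ 3 (mod 8)` has the form `x² + 2y²` with `x` and `y` odd,
because `-2` is a square modulo `p`. -/

section RootsOfUnity

variable {R M : Type*} [CommRing R] [CommMonoid M] {n : ℕ} [NeZero n] {ζ : R}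

theorem vandermonde_mul_circulant {v : Fin n → R} (hv : ∀ i, v i ^ n = 1) (a : Fin n → R) :
    Matrix.vandermonde v * Matrix.circulant a =
      Matrix.diagonal (fun i ↦ ∑ k, a k * v i ^ (k : ℕ)) * Matrix.vandermonde v := by
  ext i j
  rw [Matrix.diagonal_mul, Matrix.mul_apply, Finset.sum_mul, ← Equiv.sum_comp (Equiv.addRight j)]
  refine Finset.sum_congr rfl fun k _ ↦ ?_
  have hpow : v i ^ ((k + j : Fin n) : ℕ) = v i ^ (k : ℕ) * v i ^ (j : ℕ) := by
    rw [Fin.val_add, ← pow_add, ← pow_eq_pow_mod _ (hv i)]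
  simp only [Matrix.vandermonde_apply, Matrix.circulant_apply, Equiv.coe_addRight,
    add_sub_cancel_right, hpow]
  ring

variable [IsDomain R]

theorem prod_nthRootsFinset_eq_prod_pow (hζ : IsPrimitiveRoot ζ n) (f : R → M) :
    ∏ w ∈ Polynomial.nthRootsFinset n (1 : R), f w = ∏ l : Fin n, f (ζ ^ (l : ℕ)) := by
  have hn := NeZero.pos n
  symm
  refine Finset.prod_bij (fun l _ ↦ ζ ^ (l : ℕ)) (fun l _ ↦ ?_) (fun i _ j _ h ↦ ?_)
    (fun w hw ↦ ?_) (fun _ _ ↦ rfl)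
  · rw [Polynomial.mem_nthRootsFinset hn, pow_right_comm, hζ.pow_eq_one, one_pow]
  · exact Fin.ext (hζ.pow_inj i.2 j.2 h)
  · obtain ⟨l, hl, rfl⟩ := hζ.eq_pow_of_pow_eq_one ((Polynomial.mem_nthRootsFinset hn _).1 hw)
    exact ⟨⟨l, hl⟩, Finset.mem_univ _, rfl⟩

theorem prod_primitiveRoots_eq_prod_pow (hζ : IsPrimitiveRoot ζ n) (f : R → M) :
    ∏ w ∈ primitiveRoots n R, f w = ∏ l ∈ Finset.range n with l.Coprime n, f (ζ ^ l) := by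
  symm
  refine Finset.prod_bij (fun l _ ↦ ζ ^ l) (fun l hl ↦ ?_) (fun i hi j hj h ↦ ?_)
    (fun w hw ↦ ?_) (fun _ _ ↦ rfl)
  · rw [mem_primitiveRoots (NeZero.pos n)]
    exact hζ.pow_of_coprime l (Finset.mem_filter.1 hl).2
  · simp only [Finset.mem_filter, Finset.mem_range] at hi hj
    exact hζ.pow_inj hi.1 hj.1 h
  · obtain ⟨l, hl, hcop, rfl⟩ := hζ.isPrimitiveRoot_iff.1 (isPrimitiveRoot_of_mem_primitiveRoots hw)
    exact ⟨l, Finset.mem_filter.2 ⟨Finset.mem_range.2 hl, hcop⟩, rfl⟩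

theorem det_circulant_eq_prod_pow (hζ : IsPrimitiveRoot ζ n) (a : Fin n → R) :
    (Matrix.circulant a).det = ∏ l : Fin n, ∑ k, a k * (ζ ^ (l : ℕ)) ^ (k : ℕ) := by
  set v : Fin n → R := fun l ↦ ζ ^ (l : ℕ)
  have hv : ∀ l, v l ^ n = 1 := fun l ↦ by rw [pow_right_comm, hζ.pow_eq_one, one_pow]
  have hdet : (Matrix.vandermonde v).det ≠ 0 :=
    Matrix.det_vandermonde_ne_zero_iff.2 fun i j h ↦ Fin.ext (hζ.pow_inj i.2 j.2 h)
  have h := congrArg Matrix.det (vandermonde_mul_circulant hv a)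
  rw [Matrix.det_mul, Matrix.det_mul, Matrix.det_diagonal, mul_comm] at h
  exact mul_right_cancel₀ hdet h

theorem det_circulant_eq_prod_primitiveRoots (hζ : IsPrimitiveRoot ζ n) (a : Fin n → R) :
    (Matrix.circulant a).det =
      ∏ d ∈ n.divisors, ∏ w ∈ primitiveRoots d R, ∑ k, a k * w ^ (k : ℕ) := by
  classical
  rw [det_circulant_eq_prod_pow hζ,
    ← prod_nthRootsFinset_eq_prod_pow hζ (fun w ↦ ∑ k, a k * w ^ (k : ℕ)),
    IsPrimitiveRoot.nthRoots_one_eq_biUnion_primitiveRoots,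
    Finset.prod_biUnion fun _ _ _ _ hne ↦ IsPrimitiveRoot.disjoint hne]

theorem pow_eq_neg_one_of_isPrimitiveRoot_two_mul (hζ : IsPrimitiveRoot ζ (2 * n)) : ζ ^ n = -1 :=
  (hζ.pow (Nat.mul_pos two_pos (NeZero.pos n)) (mul_comm 2 n)).eq_neg_one_of_two_right

theorem prod_primitiveRoots_two_pow_add {m : ℕ} (hζ : IsPrimitiveRoot ζ (2 ^ (m + 2))) (x : R) :
    ∏ w ∈ primitiveRoots (2 ^ (m + 2)) R, (x + w) = x ^ 2 ^ (m + 1) + 1 := by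
  have hcard : Even #(primitiveRoots (2 ^ (m + 2)) R) := by
    rw [hζ.card_primitiveRoots, Nat.totient_prime_pow_succ Nat.prime_two]
    exact ⟨2 ^ m, by ring⟩
  have heven : Even (2 ^ (m + 1)) := Nat.even_pow.2 ⟨even_two, m.succ_ne_zero⟩
  calc ∏ w ∈ primitiveRoots (2 ^ (m + 2)) R, (x + w)
      = ∏ w ∈ primitiveRoots (2 ^ (m + 2)) R, (-x - w) := by
        simp_rw [← neg_add', Finset.prod_neg, hcard.neg_one_pow, one_mul]
    _ = (Polynomial.cyclotomic (2 ^ (m + 2)) R).eval (-x) := by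
        simp [Polynomial.cyclotomic_eq_prod_X_sub_primitiveRoots hζ, Polynomial.eval_prod]
    _ = x ^ 2 ^ (m + 1) + 1 := by
        rw [Polynomial.cyclotomic_prime_pow_eq_geom_sum Nat.prime_two]
        simp [Finset.sum_range_succ, heven.neg_pow, add_comm]

/-- Since `(w + w³)² = -2`, this is the norm of `x - y √-2` from `ℚ(ζ₈)` to `ℚ` when `x` and `y`
are rational. -/
theorem prod_primitiveRoots_eight_sub_mul (hζ : IsPrimitiveRoot ζ 8) (x y : R) :
    ∏ w ∈ primitiveRoots 8 R, (x - y * (w + w ^ 3)) = (x ^ 2 + 2 * y ^ 2) ^ 2 := by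
  have hζ4 : ζ ^ 4 = -1 := pow_eq_neg_one_of_isPrimitiveRoot_two_mul hζ
  have hfilter : {l ∈ Finset.range 8 | l.Coprime 8} = {1, 3, 5, 7} := by decide
  have hsq : (ζ + ζ ^ 3) ^ 2 = -2 := by linear_combination (ζ ^ 2 + 2) * hζ4
  have h3 : ζ ^ 3 + (ζ ^ 3) ^ 3 = ζ + ζ ^ 3 := by linear_combination (ζ ^ 5 - ζ) * hζ4
  have h5 : ζ ^ 5 + (ζ ^ 5) ^ 3 = -(ζ + ζ ^ 3) := by
    linear_combination (ζ ^ 11 - ζ ^ 7 + ζ ^ 3 + ζ) * hζ4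
  have h7 : ζ ^ 7 + (ζ ^ 7) ^ 3 = -(ζ + ζ ^ 3) := by
    linear_combination (ζ ^ 17 - ζ ^ 13 + ζ ^ 9 - ζ ^ 5 + ζ ^ 3 + ζ) * hζ4
  calc ∏ w ∈ primitiveRoots 8 R, (x - y * (w + w ^ 3))
      = ((x - y * (ζ + ζ ^ 3)) * (x + y * (ζ + ζ ^ 3))) ^ 2 := by
        rw [prod_primitiveRoots_eq_prod_pow hζ, hfilter, Finset.prod_insert (by decide),
          Finset.prod_insert (by decide), Finset.prod_insert (by decide), Finset.prod_singleton,
          pow_one, h3, h5, h7]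
        ring
    _ = (x ^ 2 - y ^ 2 * (ζ + ζ ^ 3) ^ 2) ^ 2 := by ring
    _ = (x ^ 2 + 2 * y ^ 2) ^ 2 := by rw [hsq]; ring

end RootsOfUnity

section CirculantFamily

theorem circMatrix_det_eq_prod_primitiveRoots (a : Fin 16 → ℤ) :
    ((circMatrix a).det : ℂ) = ∏ d ∈ Nat.divisors 16, ∏ w ∈ primitiveRoots d ℂ, fpoly a w := by
  have hcast : ((circMatrix a).det : ℂ) = (Matrix.circulant fun k ↦ (a k : ℂ)).det := by
    rw [← eq_intCast (Int.castRingHom ℂ), RingHom.map_det]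
    rfl
  rw [hcast, det_circulant_eq_prod_primitiveRoots (isPrimitiveRoot_exp 16 (by norm_num))]
  rfl

/-- The coefficients of
`1 + X + X² + X¹⁰ + (1 - X⁴) (1 + X⁸) (t + t X + (s + t) X² + (s - t) X³)`. The last summand is
chosen so that the product of the values at the primitive eighth roots of unity is twice the norm
of `(1 + 4 s) - (1 + 4 t) √-2`. -/
def normFormCoeff (s t : ℤ) : Fin 16 → ℤ :=
  ![1 + t, 1 + t, 1 + s + t, s - t,
    -t, -t, -s - t, t - s,
    t, t, 1 + s + t, s - t,
    -t, -t, -s - t, t - s]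

variable (s t : ℤ)

theorem fpoly_normFormCoeff (w : ℂ) :
    fpoly (normFormCoeff s t) w = 1 + w + w ^ 2 + w ^ 10 +
      (1 - w ^ 4) * (1 + w ^ 8) * (t + t * w + (s + t) * w ^ 2 + (s - t) * w ^ 3) := by
  simp only [fpoly, normFormCoeff, Fin.sum_univ_succ, Fin.isValue, Matrix.cons_val_zero,
    Matrix.cons_val_succ, Matrix.cons_val_fin_one, Fin.coe_ofNat_eq_mod, Nat.zero_mod, Fin.val_succ,
    Fin.val_eq_zero, Fin.default_eq_zero, univ_unique, sum_const, card_singleton, one_smul]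
  push_cast
  ring

theorem prod_primitiveRoots_one_fpoly_normFormCoeff :
    ∏ w ∈ primitiveRoots 1 ℂ, fpoly (normFormCoeff s t) w = 4 := by
  rw [IsPrimitiveRoot.primitiveRoots_one, Finset.prod_singleton, fpoly_normFormCoeff]
  norm_num

theorem prod_primitiveRoots_two_fpoly_normFormCoeff :
    ∏ w ∈ primitiveRoots 2 ℂ, fpoly (normFormCoeff s t) w = 2 := by
  have hroots : primitiveRoots 2 ℂ = {-1} := by
    ext w
    rw [mem_primitiveRoots two_pos, Finset.mem_singleton]
    exact ⟨IsPrimitiveRoot.eq_neg_one_of_two_right,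
      fun h ↦ h ▸ IsPrimitiveRoot.neg_one 0 (by norm_num)⟩
  rw [hroots, Finset.prod_singleton, fpoly_normFormCoeff]
  norm_num

theorem prod_primitiveRoots_four_fpoly_normFormCoeff :
    ∏ w ∈ primitiveRoots 4 ℂ, fpoly (normFormCoeff s t) w = 2 := by
  have hval : ∀ w ∈ primitiveRoots 4 ℂ, fpoly (normFormCoeff s t) w = -1 + w := fun w hw ↦ by
    have hw2 : w ^ 2 = -1 :=
      pow_eq_neg_one_of_isPrimitiveRoot_two_mul (isPrimitiveRoot_of_mem_primitiveRoots hw)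
    rw [fpoly_normFormCoeff, show w ^ 10 = (w ^ 2) ^ 5 by ring, show w ^ 4 = (w ^ 2) ^ 2 by ring,
      hw2]
    ring
  rw [Finset.prod_congr rfl hval]
  exact (prod_primitiveRoots_two_pow_add (m := 0) (isPrimitiveRoot_exp 4 (by norm_num)) (-1)).trans
    (by norm_num)

theorem prod_primitiveRoots_eight_fpoly_normFormCoeff :
    ∏ w ∈ primitiveRoots 8 ℂ, fpoly (normFormCoeff s t) w =
      2 * ((1 + 4 * s) ^ 2 + 2 * (1 + 4 * t) ^ 2) ^ 2 := by
  have hζ := isPrimitiveRoot_exp 8 (by norm_num)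
  have hprod_one_add : ∏ w ∈ primitiveRoots 8 ℂ, (1 + w) = 2 :=
    (prod_primitiveRoots_two_pow_add (m := 1) hζ 1).trans (by norm_num)
  have hprod : ∏ w ∈ primitiveRoots 8 ℂ, w = 1 := by
    calc ∏ w ∈ primitiveRoots 8 ℂ, w = ∏ w ∈ primitiveRoots 8 ℂ, (0 + w) := by
          simp only [zero_add]
      _ = 1 := (prod_primitiveRoots_two_pow_add (m := 1) hζ 0).trans (by norm_num)
  have hval : ∀ w ∈ primitiveRoots 8 ℂ, fpoly (normFormCoeff s t) w =
      (1 + w) * w ^ 2 * ((1 + 4 * s) - (1 + 4 * t) * (w + w ^ 3)) := fun w hw ↦ by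
    have hw4 : w ^ 4 = -1 :=
      pow_eq_neg_one_of_isPrimitiveRoot_two_mul (isPrimitiveRoot_of_mem_primitiveRoots hw)
    rw [fpoly_normFormCoeff, show w ^ 10 = (w ^ 4) ^ 2 * w ^ 2 by ring,
      show w ^ 8 = (w ^ 4) ^ 2 by ring, hw4]
    linear_combination (1 + 4 * t) * (1 + w + w ^ 2) * hw4
  rw [Finset.prod_congr rfl hval, Finset.prod_mul_distrib, Finset.prod_mul_distrib,
    Finset.prod_pow, hprod_one_add, hprod, prod_primitiveRoots_eight_sub_mul hζ, one_pow, mul_one]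

theorem prod_primitiveRoots_sixteen_fpoly_normFormCoeff :
    ∏ w ∈ primitiveRoots 16 ℂ, fpoly (normFormCoeff s t) w = 2 := by
  have hval : ∀ w ∈ primitiveRoots 16 ℂ, fpoly (normFormCoeff s t) w = 1 + w := fun w hw ↦ by
    have hw8 : w ^ 8 = -1 :=
      pow_eq_neg_one_of_isPrimitiveRoot_two_mul (isPrimitiveRoot_of_mem_primitiveRoots hw)
    rw [fpoly_normFormCoeff, show w ^ 10 = w ^ 8 * w ^ 2 by ring, hw8]
    ring
  rw [Finset.prod_congr rfl hval]
  exact (prod_primitiveRoots_two_pow_add (m := 2) (isPrimitiveRoot_exp 16 (by norm_num)) 1).trans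
    (by norm_num)

theorem det_circMatrix_normFormCoeff :
    (circMatrix (normFormCoeff s t)).det =
      64 * ((1 + 4 * s) ^ 2 + 2 * (1 + 4 * t) ^ 2) ^ 2 := by
  have hdiv : Nat.divisors 16 = {1, 2, 4, 8, 16} := by decide
  have hdet : ((circMatrix (normFormCoeff s t)).det : ℂ) =
      64 * ((1 + 4 * s) ^ 2 + 2 * (1 + 4 * t) ^ 2) ^ 2 := by
    rw [circMatrix_det_eq_prod_primitiveRoots, hdiv, Finset.prod_insert (by decide),
      Finset.prod_insert (by decide), Finset.prod_insert (by decide),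
      Finset.prod_insert (by decide), Finset.prod_singleton,
      prod_primitiveRoots_one_fpoly_normFormCoeff, prod_primitiveRoots_two_fpoly_normFormCoeff,
      prod_primitiveRoots_four_fpoly_normFormCoeff, prod_primitiveRoots_eight_fpoly_normFormCoeff,
      prod_primitiveRoots_sixteen_fpoly_normFormCoeff]
    ring
  exact_mod_cast hdet

theorem exists_one_add_four_mul_sq_eq_sq {x : ℤ} (hx : Odd x) : ∃ s, (1 + 4 * s) ^ 2 = x ^ 2 := by
  obtain ⟨k, rfl⟩ := hx
  obtain ⟨m, rfl⟩ | ⟨m, rfl⟩ := k.even_or_odd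
  · exact ⟨m, by ring⟩
  · exact ⟨-m - 1, by ring⟩

theorem sixty_four_p_sq_mem_S16_of_three_mod_eight_general {x y : ℤ} (hx : Odd x) (hy : Odd y) :
    64 * (x ^ 2 + 2 * y ^ 2) ^ 2 ∈ S16 := by
  obtain ⟨s, hs⟩ := exists_one_add_four_mul_sq_eq_sq hx
  obtain ⟨t, ht⟩ := exists_one_add_four_mul_sq_eq_sq hy
  exact ⟨normFormCoeff s t, by rw [det_circMatrix_normFormCoeff, hs, ht]⟩

end CirculantFamily

section QuadraticForm

/-- Thue's lemma: pigeonhole for `(u, v) ↦ u - r v` on the box `0 ≤ u, v ≤ √n`. -/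
theorem exists_sq_le_sq_le_intCast_eq_mul {n : ℕ} [NeZero n] (r : ZMod n) :
    ∃ x y : ℤ, (x ≠ 0 ∨ y ≠ 0) ∧ x ^ 2 ≤ n ∧ y ^ 2 ≤ n ∧ (x : ZMod n) = r * y := by
  have hcard : Fintype.card (ZMod n) <
      Fintype.card (Fin (n.sqrt + 1) × Fin (n.sqrt + 1)) := by
    simpa [ZMod.card] using n.lt_succ_sqrt
  obtain ⟨⟨x₁, y₁⟩, ⟨x₂, y₂⟩, hne, heq⟩ := Fintype.exists_ne_map_eq_of_card_lt
    (fun u : Fin (n.sqrt + 1) × Fin (n.sqrt + 1) ↦ ((u.1 : ℕ) : ZMod n) - r * (u.2 : ℕ)) hcard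
  have sq_sub_le : ∀ i j : Fin (n.sqrt + 1), ((i : ℤ) - (j : ℤ)) ^ 2 ≤ n := fun i j ↦ by
    have habs : |(i : ℤ) - j| ≤ n.sqrt := by rw [abs_le]; omega
    calc ((i : ℤ) - j) ^ 2 ≤ (n.sqrt : ℤ) ^ 2 := sq_le_sq' (abs_le.1 habs).1 (abs_le.1 habs).2
      _ ≤ n := mod_cast n.sqrt_le'
  refine ⟨(x₁ : ℤ) - x₂, (y₁ : ℤ) - y₂, ?_, sq_sub_le _ _, sq_sub_le _ _, ?_⟩
  · contrapose! hne
    ext <;> simp only <;> omega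
  · push_cast
    linear_combination heq

theorem eq_sq_add_two_mul_sq_of_isSquare_neg_two {n : ℕ} (h : IsSquare (-2 : ZMod n)) :
    ∃ x y : ℤ, (n : ℤ) = x ^ 2 + 2 * y ^ 2 := by
  rcases eq_or_ne n 0 with rfl | hn
  · exact ⟨0, 0, by norm_num⟩
  have : NeZero n := ⟨hn⟩
  obtain ⟨r, hr⟩ := h
  obtain ⟨x, y, hne, hx, hy, hxy⟩ := exists_sq_le_sq_le_intCast_eq_mul r
  obtain ⟨c, hc⟩ : (n : ℤ) ∣ x ^ 2 + 2 * y ^ 2 := by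
    rw [← ZMod.intCast_zmod_eq_zero_iff_dvd]
    push_cast
    linear_combination (x + r * y) * hxy - (y : ZMod n) ^ 2 * hr
  have hpos : 0 < x ^ 2 + 2 * y ^ 2 := by
    rcases hne with hx0 | hy0 <;> positivity
  have hn0 : (0 : ℤ) < n := by positivity
  have hc0 : 0 < c := pos_of_mul_pos_right (hc ▸ hpos) hn0.le
  have hc3 : c ≤ 3 := le_of_mul_le_mul_left (by linarith : (n : ℤ) * c ≤ n * 3) hn0
  interval_cases c
  · exact ⟨x, y, by linarith⟩
  · have hev : Even (x ^ 2) := ⟨n - y ^ 2, by linarith⟩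
    obtain ⟨k, rfl⟩ := (Int.even_pow' two_ne_zero).1 hev
    exact ⟨y, k, by linarith⟩
  · exact ⟨x, 0, by linarith⟩

theorem odd_and_odd_of_sq_add_two_mul_sq_emod_four {x y : ℤ} (h : (x ^ 2 + 2 * y ^ 2) % 4 = 3) :
    Odd x ∧ Odd y := by
  have hx : Odd x := (Int.odd_pow' two_ne_zero).1 (Int.odd_iff.2 (by omega))
  refine ⟨hx, Int.not_even_iff_odd.1 fun hy ↦ ?_⟩
  have hx_sq : x ^ 2 % 4 = 1 := Int.sq_mod_four_eq_one_of_odd hx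
  have hy_sq : y ^ 2 % 2 = 0 := Int.even_iff.1 (hy.pow_of_ne_zero two_ne_zero)
  omega

theorem prime_eq_odd_sq_add_two_mul_odd_sq {p : ℕ} (hp : p.Prime) (h3 : p % 8 = 3) :
    ∃ x y : ℤ, Odd x ∧ Odd y ∧ (p : ℤ) = x ^ 2 + 2 * y ^ 2 := by
  have : Fact p.Prime := ⟨hp⟩
  have hsq : IsSquare (-2 : ZMod p) :=
    (ZMod.exists_sq_eq_neg_two_iff (by rintro rfl; omega)).2 (Or.inr h3)
  obtain ⟨x, y, h⟩ := eq_sq_add_two_mul_sq_of_isSquare_neg_two hsq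
  obtain ⟨hx, hy⟩ : Odd x ∧ Odd y := odd_and_odd_of_sq_add_two_mul_sq_emod_four (by omega)
  exact ⟨x, y, hx, hy, h⟩

end QuadraticForm

theorem sixty_four_p_sq_mem_S16_of_three_mod_eight (p : ℕ) (hp : p.Prime) (h3 : p % 8 = 3) :
    (64 * (p : ℤ) ^ 2) ∈ S16 := by
  obtain ⟨x, y, hx, hy, h⟩ := prime_eq_odd_sq_add_two_mul_odd_sq hp h3
  exact h ▸ sixty_four_p_sq_mem_S16_of_three_mod_eight_general hx hy
end
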